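/- arXiv:1410.4128 — 4 statements merged into one kernel-verified Lean document; each statement's English description precedes it below -/
import Mathlib

section
/- Let f ∈ GR_D(Q0,ε) for some ε ∈ (0, 1/2^{n−1}), and let p > 1 be the unique real number with p^p/(p−1)^{p−1} = 1/(2^{n−1}ε). Then f ∈ L^q(Q0) for every q ∈ [1, p), i.e. ∫_{Q0} f(x)^q dx < ∞ for every such q. -/
open MeasureTheory Set Real

noncomputable section

/-- The unit cube `Q₀ = [0,1]ⁿ` in `ℝⁿ`. -/
def Q0 (n : ℕ) : Set (Fin n → ℝ) := Set.Icc 0 1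

/-- The integral average `f_Q = (1/|Q|) ∫_Q f` of `f` over `Q`. -/
def avgOn {n : ℕ} (f : (Fin n → ℝ) → ℝ) (Q : Set (Fin n → ℝ)) : ℝ :=
  (volume Q).toReal⁻¹ * ∫ x in Q, f x

/-- The mean oscillation `Ω(f,Q) = (1/|Q|) ∫_Q |f - f_Q|` of `f` over `Q`. -/
def oscOn {n : ℕ} (f : (Fin n → ℝ) → ℝ) (Q : Set (Fin n → ℝ)) : ℝ :=
  (volume Q).toReal⁻¹ * ∫ x in Q, |f x - avgOn f Q|

/-- `Q` is a dyadic subcube of `[0,1]ⁿ` of side length `2⁻ᵏ`,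
i.e. `Q = ∏ᵢ [mᵢ 2⁻ᵏ, (mᵢ+1) 2⁻ᵏ]` with `0 ≤ mᵢ < 2ᵏ`. -/
def IsDyadicSide (n k : ℕ) (Q : Set (Fin n → ℝ)) : Prop :=
  ∃ m : Fin n → ℕ, (∀ i, m i < 2 ^ k) ∧
    Q = Set.Icc (fun i => (m i : ℝ) / 2 ^ k) (fun i => ((m i : ℝ) + 1) / 2 ^ k)

/-- `Q` belongs to the family `𝒟` of dyadic subcubes of `[0,1]ⁿ`. -/
def IsDyadic (n : ℕ) (Q : Set (Fin n → ℝ)) : Prop := ∃ k, IsDyadicSide n k Q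

/-- One-dimensional integral average `g_J` over a set `J ⊆ ℝ`. -/
def avgI (g : ℝ → ℝ) (J : Set ℝ) : ℝ := (volume J).toReal⁻¹ * ∫ u in J, g u

/-- One-dimensional mean oscillation `Ω(g,J)` over a set `J ⊆ ℝ`. -/
def oscI (g : ℝ → ℝ) (J : Set ℝ) : ℝ :=
  (volume J).toReal⁻¹ * ∫ u in J, |g u - avgI g J|

/-- `g : (0,1] → ℝ` is the nonincreasing, left-continuous rearrangement of
`f : [0,1]ⁿ → ℝ`, i.e. it is nonincreasing, left continuous and equimeasurable with `f`. -/
def IsRearrangement {n : ℕ} (f : (Fin n → ℝ) → ℝ) (g : ℝ → ℝ) : Prop :=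
  AntitoneOn g (Set.Ioc 0 1) ∧
  (∀ t ∈ Set.Ioc (0:ℝ) 1, ContinuousWithinAt g (Set.Iio t) t) ∧
  ∀ lam : ℝ, volume {t ∈ Set.Ioc (0:ℝ) 1 | lam < g t} = volume {x ∈ Q0 n | lam < f x}

/-- The Hardy average `F(t) = (1/t) ∫_0^t g(u) du`. -/
def hardyAvg (g : ℝ → ℝ) (t : ℝ) : ℝ := t⁻¹ * ∫ u in Set.Ioc (0:ℝ) t, g u

/-- The Gurov–Reshetnyak modulus
`v(f;σ) = sup { Ω(f,Q)/f_Q : Q ∈ 𝒟, ℓ(Q) ≤ σ, f_Q > 0 }` (equal to `0` if no such `Q` exists,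
by the convention `sSup ∅ = 0` in `ℝ`). -/
def vGR {n : ℕ} (f : (Fin n → ℝ) → ℝ) (σ : ℝ) : ℝ :=
  sSup {r : ℝ | ∃ k Q, IsDyadicSide n k Q ∧ ((2:ℝ) ^ k)⁻¹ ≤ σ ∧
    0 < avgOn f Q ∧ r = oscOn f Q / avgOn f Q}

/-- `f` satisfies the dyadic Gurov–Reshetnyak condition `f ∈ GR_𝒟(Q₀,ε)`:
`f : Q₀ → [0,∞)` is integrable and `Ω(f,Q) ≤ ε f_Q` for every dyadic cube `Q`. -/
def GRcond {n : ℕ} (f : (Fin n → ℝ) → ℝ) (ε : ℝ) : Prop :=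
  IntegrableOn f (Q0 n) ∧ (∀ x ∈ Q0 n, 0 ≤ f x) ∧
    ∀ Q, IsDyadic n Q → oscOn f Q ≤ ε * avgOn f Q

open Filter Topology
open scoped ENNReal

/-!
For a cube `Q` and `l ≥ f_Q`, the function `f - f_Q` has mean zero, so the Gurov–Reshetnyak
condition reads `∫_Q (f - l)₊ ≤ (ε / 2) l |Q|`. Apply it to the maximal dyadic cubes having a child
whose average exceeds `l`: such a child `Q'` has measure `2⁻ⁿ |Q|` and satisfies
`(l - s) |Q'| ≤ ∫_Q' (f - s)₊` for every `s < l`. As `f ≤ l` almost everywhere off these cubes by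
Lebesgue differentiation, summing over them gives, for `l ≥ f_Q₀` and `c > 1`,
`∫ (f - l)₊ ≤ 2ⁿ⁻¹ ε c / (c - 1) ∫ (f - l / c)₊`.
Iterating along the heights `t₀ cᵏ` yields geometric decay of `∫ (f - t)₊`, and hence `f ∈ L^q` as
soon as `c ^ (q - 1)` times the constant is less than `1`. The choice `c = p / (p - 1)` makes the
constant equal to `c ^ (1 - p)`.
-/

section Excess

variable {α : Type*} [MeasurableSpace α] {μ : Measure α} {f : α → ℝ}

/-- The integral `∫ (f - t)₊ dμ` of the part of `f` above the height `t`; the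
positive part is implicit in `ENNReal.ofReal`, which sends negative numbers to `0`. -/
def excess (μ : Measure α) (f : α → ℝ) (t : ℝ) : ℝ≥0∞ :=
  ∫⁻ x, ENNReal.ofReal (f x - t) ∂μ

lemma excess_anti (μ : Measure α) (f : α → ℝ) : Antitone (excess μ f) := fun _ _ h =>
  lintegral_mono fun _ => ENNReal.ofReal_le_ofReal (sub_le_sub_left h _)

lemma excess_mono_measure {ν : Measure α} (h : μ ≤ ν) (t : ℝ) : excess μ f t ≤ excess ν f t :=
  lintegral_mono' h le_rfl

lemma excess_ne_top (hf : Integrable f μ) {t : ℝ} (ht : 0 ≤ t) : excess μ f t ≠ ∞ := by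
  have hle : excess μ f t ≤ ∫⁻ x, ‖f x‖ₑ ∂μ :=
    (excess_anti μ f ht).trans (by simpa [excess] using lintegral_ofReal_le_lintegral_enorm f)
  exact (hle.trans_lt hf.2).ne

lemma excess_eq_ofReal_integral [IsFiniteMeasure μ] (hf : Integrable f μ) (t : ℝ) :
    excess μ f t = ENNReal.ofReal (∫ x, max (f x - t) 0 ∂μ) := by
  have hft : Integrable (fun x => f x - t) μ := hf.sub (integrable_const t)
  rw [ofReal_integral_eq_lintegral_ofReal hft.pos_part (.of_forall fun _ => le_max_right _ _)]
  simp [excess]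

lemma ofReal_average_sub_mul_le_excess [IsFiniteMeasure μ] (hf : Integrable f μ) (t : ℝ) :
    ENNReal.ofReal ((⨍ x, f x ∂μ) - t) * μ univ ≤ excess μ f t := by
  have hft : Integrable (fun x => f x - t) μ := hf.sub (integrable_const t)
  rw [excess_eq_ofReal_integral hf, ← ofReal_measureReal, mul_comm,
    ← ENNReal.ofReal_mul measureReal_nonneg]
  refine ENNReal.ofReal_le_ofReal ?_
  calc μ.real univ * ((⨍ x, f x ∂μ) - t) = ∫ x, (f x - t) ∂μ := by
        rw [integral_sub hf (integrable_const t), ← measure_smul_average, integral_const,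
          smul_eq_mul, smul_eq_mul, mul_sub]
    _ ≤ ∫ x, max (f x - t) 0 ∂μ :=
        integral_mono hft hft.pos_part fun _ => le_max_left _ _

-- `f - ⨍ f` has mean zero, so its positive part carries half of its `L¹` norm.
lemma excess_average_eq [IsFiniteMeasure μ] (hf : Integrable f μ) :
    excess μ f (⨍ x, f x ∂μ) = ENNReal.ofReal ((⨍ x, |f x - ⨍ y, f y ∂μ| ∂μ) / 2) * μ univ := by
  set a := ⨍ x, f x ∂μ
  have hfa : Integrable (fun x => f x - a) μ := hf.sub (integrable_const a)
  have hmax (y : ℝ) : max y 0 = (|y| + y) / 2 := by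
    rcases le_total 0 y with hy | hy <;> simp [hy, abs_of_nonneg, abs_of_nonpos]
  have hmean : ∫ x, (f x - a) ∂μ = 0 := integral_sub_average μ f
  rw [excess_eq_ofReal_integral hf, ← ofReal_measureReal, mul_comm,
    ← ENNReal.ofReal_mul measureReal_nonneg, ← mul_div_assoc, ← smul_eq_mul, measure_smul_average]
  simp only [hmax]
  rw [integral_div, integral_add hfa.abs hfa, hmean, add_zero]

lemma excess_le_of_average_abs_sub_le [IsFiniteMeasure μ] (hf : Integrable f μ) {ε t : ℝ}
    (hε : 0 ≤ ε) (hosc : ⨍ x, |f x - ⨍ y, f y ∂μ| ∂μ ≤ ε * ⨍ x, f x ∂μ)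
    (ht : ⨍ x, f x ∂μ ≤ t) :
    excess μ f t ≤ ENNReal.ofReal (ε / 2 * t) * μ univ := by
  refine (excess_anti μ f ht).trans ((excess_average_eq hf).trans_le ?_)
  gcongr
  linarith [mul_le_mul_of_nonneg_left ht hε]

end Excess

section GeometricDecay

variable {c t₀ q : ℝ}

lemma rpow_le_mul_sub {t y : ℝ} (hc : 1 < c) (hq : 1 ≤ q) (ht : 0 < t) (hty : c * t ≤ y)
    (hyt : y ≤ c * c * t) : y ^ q ≤ (c * c * t) ^ (q - 1) * (c / (c - 1)) * (y - t) := by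
  have hc1 : 0 < c - 1 := sub_pos.2 hc
  have hy : 0 < y := (by positivity : 0 < c * t).trans_le hty
  have hlin : y ≤ c / (c - 1) * (y - t) := by
    rw [div_mul_eq_mul_div, le_div_iff₀ hc1]
    linarith
  calc y ^ q = y ^ (q - 1) * y := by rw [Real.rpow_sub_one hy.ne', div_mul_cancel₀ _ hy.ne']
    _ ≤ (c * c * t) ^ (q - 1) * (c / (c - 1) * (y - t)) := by gcongr
    _ = _ := by ring

lemma exists_mem_Ico_mul_pow {y : ℝ} (hc : 1 < c) (ht₀ : 0 < t₀) (hy : c * t₀ ≤ y) :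
    ∃ k : ℕ, y ∈ Ico (c * (t₀ * c ^ k)) (c * c * (t₀ * c ^ k)) := by
  have hct₀ : 0 < c * t₀ := by positivity
  obtain ⟨k, hk, hk'⟩ := exists_nat_pow_near ((one_le_div hct₀).2 hy) hc
  rw [le_div_iff₀ hct₀] at hk
  rw [div_lt_iff₀ hct₀, pow_succ] at hk'
  exact ⟨k, by linarith, by linarith⟩

lemma ofReal_rpow_le_add_tsum {y : ℝ} (hc : 1 < c) (ht₀ : 0 < t₀) (hq : 1 ≤ q) (hy : 0 ≤ y) :
    ENNReal.ofReal (y ^ q) ≤ ENNReal.ofReal ((c * t₀) ^ q) +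
      ∑' k : ℕ, ENNReal.ofReal ((c * c * (t₀ * c ^ k)) ^ (q - 1) * (c / (c - 1))) *
        ENNReal.ofReal (y - t₀ * c ^ k) := by
  have : 0 < c - 1 := sub_pos.2 hc
  rcases le_total y (c * t₀) with hyt | hyt
  · exact le_add_right (ENNReal.ofReal_le_ofReal (by gcongr))
  · obtain ⟨k, hk, hk'⟩ := exists_mem_Ico_mul_pow hc ht₀ hyt
    refine le_add_left (le_trans ?_ (ENNReal.le_tsum k))
    rw [← ENNReal.ofReal_mul (by positivity)]
    exact ENNReal.ofReal_le_ofReal (rpow_le_mul_sub hc hq (by positivity) hk hk'.le)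

lemma mul_pow_rpow {a s : ℝ} (ha : 0 ≤ a) (hc : 0 ≤ c) (k : ℕ) :
    (a * c ^ k) ^ s = a ^ s * (c ^ s) ^ k := by
  rw [Real.mul_rpow ha (pow_nonneg hc k), Real.rpow_pow_comm hc]

variable {α : Type*} [MeasurableSpace α] {μ : Measure α} {f : α → ℝ} {C : ℝ≥0∞}

lemma excess_mul_pow_le (hc : 1 ≤ c) (ht₀ : 0 ≤ t₀)
    (hdecay : ∀ t ≥ t₀, excess μ f (c * t) ≤ C * excess μ f t) (k : ℕ) :
    excess μ f (t₀ * c ^ k) ≤ C ^ k * excess μ f t₀ := by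
  induction k with
  | zero => simp
  | succ k ih =>
    calc excess μ f (t₀ * c ^ (k + 1)) = excess μ f (c * (t₀ * c ^ k)) := by ring_nf
      _ ≤ C * excess μ f (t₀ * c ^ k) := hdecay _ (le_mul_of_one_le_right ht₀ (one_le_pow₀ hc))
      _ ≤ C * (C ^ k * excess μ f t₀) := by gcongr
      _ = C ^ (k + 1) * excess μ f t₀ := by ring

lemma lintegral_rpow_le_add_tsum_excess (hfm : AEMeasurable f μ) (hf₀ : 0 ≤ᵐ[μ] f) (hc : 1 < c)
    (ht₀ : 0 < t₀) (hq : 1 ≤ q) :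
    ∫⁻ x, ENNReal.ofReal (f x ^ q) ∂μ ≤ ENNReal.ofReal ((c * t₀) ^ q) * μ univ +
      ∑' k : ℕ, ENNReal.ofReal ((c * c * (t₀ * c ^ k)) ^ (q - 1) * (c / (c - 1))) *
        excess μ f (t₀ * c ^ k) := by
  calc ∫⁻ x, ENNReal.ofReal (f x ^ q) ∂μ
      ≤ ∫⁻ x, (ENNReal.ofReal ((c * t₀) ^ q) +
          ∑' k : ℕ, ENNReal.ofReal ((c * c * (t₀ * c ^ k)) ^ (q - 1) * (c / (c - 1))) *
            ENNReal.ofReal (f x - t₀ * c ^ k)) ∂μ :=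
        lintegral_mono_ae (hf₀.mono fun x hx => ofReal_rpow_le_add_tsum hc ht₀ hq hx)
    _ = _ := by
        rw [lintegral_add_left measurable_const, lintegral_const,
          lintegral_tsum fun k => ((hfm.sub_const _).ennreal_ofReal).const_mul _]
        simp only [excess, lintegral_const_mul' _ _ ENNReal.ofReal_ne_top]

theorem integrable_rpow_of_excess_decay [IsFiniteMeasure μ] (hf : Integrable f μ)
    (hf₀ : 0 ≤ᵐ[μ] f) (hc : 1 < c) (ht₀ : 0 < t₀) (hq : 1 ≤ q)
    (hC : ENNReal.ofReal (c ^ (q - 1)) * C < 1)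
    (hdecay : ∀ t ≥ t₀, excess μ f (c * t) ≤ C * excess μ f t) :
    Integrable (fun x => f x ^ q) μ := by
  have : 0 < c - 1 := sub_pos.2 hc
  set D := ENNReal.ofReal ((c * c * t₀) ^ (q - 1) * (c / (c - 1)))
  set r := ENNReal.ofReal (c ^ (q - 1)) * C
  have hterm (k : ℕ) : ENNReal.ofReal ((c * c * (t₀ * c ^ k)) ^ (q - 1) * (c / (c - 1))) *
      excess μ f (t₀ * c ^ k) ≤ D * excess μ f t₀ * r ^ k := by
    calc _ = D * ENNReal.ofReal (c ^ (q - 1)) ^ k * excess μ f (t₀ * c ^ k) := by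
          rw [← ENNReal.ofReal_pow (by positivity), ← ENNReal.ofReal_mul (by positivity),
            ← mul_assoc, mul_pow_rpow (by positivity) (by positivity), mul_right_comm]
      _ ≤ D * ENNReal.ofReal (c ^ (q - 1)) ^ k * (C ^ k * excess μ f t₀) := by
          gcongr
          exact excess_mul_pow_le hc.le ht₀.le hdecay k
      _ = D * excess μ f t₀ * r ^ k := by ring
  have hsum : ∑' k : ℕ, D * excess μ f t₀ * r ^ k < ∞ := by
    rw [ENNReal.tsum_mul_left, ENNReal.tsum_geometric]
    refine ENNReal.mul_lt_top (ENNReal.mul_lt_top ENNReal.ofReal_lt_top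
      (excess_ne_top hf ht₀.le).lt_top) ?_
    rwa [ENNReal.inv_lt_top, tsub_pos_iff_lt]
  refine ⟨(hf.aemeasurable.pow_const q).aestronglyMeasurable, ?_⟩
  rw [hasFiniteIntegral_iff_ofReal (hf₀.mono fun x hx => Real.rpow_nonneg hx q)]
  calc _ ≤ _ := lintegral_rpow_le_add_tsum_excess hf.aemeasurable hf₀ hc ht₀ hq
    _ ≤ ENNReal.ofReal ((c * t₀) ^ q) * μ univ + ∑' k : ℕ, D * excess μ f t₀ * r ^ k :=
        add_le_add_right (ENNReal.tsum_le_tsum hterm) _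
    _ < ∞ := ENNReal.add_lt_top.2
        ⟨ENNReal.mul_lt_top ENNReal.ofReal_lt_top (measure_lt_top μ univ), hsum⟩

end GeometricDecay

section DyadicCube

variable {ι : Type*}

/-- The index of the dyadic cube of side length `2⁻ᵏ` in `ℝ^ι` containing `x`. -/
def dyadicIndex (k : ℕ) (x : ι → ℝ) : ι → ℤ := fun i => ⌊2 ^ k * x i⌋

/-- The half-open dyadic cube `∏ᵢ [mᵢ 2⁻ᵏ, (mᵢ+1) 2⁻ᵏ)`. Half-open cubes of a given side length
partition `ℝ^ι`; this is encoded by taking them to be the fibres of `dyadicIndex k`. -/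
def dyadicCube (k : ℕ) (m : ι → ℤ) : Set (ι → ℝ) := dyadicIndex k ⁻¹' {m}

lemma mem_dyadicCube {k : ℕ} {m : ι → ℤ} {x : ι → ℝ} :
    x ∈ dyadicCube k m ↔ dyadicIndex k x = m := Iff.rfl

lemma dyadicCube_eq_pi (k : ℕ) (m : ι → ℤ) :
    dyadicCube k m = univ.pi fun i => Ico ((m i : ℝ) / 2 ^ k) ((m i + 1) / 2 ^ k) := by
  have h2 : (0 : ℝ) < 2 ^ k := by positivity
  ext x
  simp only [mem_dyadicCube, funext_iff, dyadicIndex, Int.floor_eq_iff, mem_univ_pi, mem_Ico,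
    div_le_iff₀' h2, lt_div_iff₀' h2]

lemma dyadicIndex_div_two_pow (k d : ℕ) (x : ι → ℝ) (i : ι) :
    dyadicIndex (k + d) x i / 2 ^ d = dyadicIndex k x i := by
  have hfloor := Int.floor_div_natCast (2 ^ (k + d) * x i) (2 ^ d)
  push_cast at hfloor
  rw [dyadicIndex, dyadicIndex, ← hfloor, pow_add]
  field_simp

lemma pairwise_disjoint_dyadicCube (k : ℕ) :
    Pairwise (Function.onFun Disjoint (dyadicCube k : (ι → ℤ) → Set (ι → ℝ))) :=
  pairwise_disjoint_fiber (dyadicIndex k)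

lemma dyadicCube_subset_of_mem {j k : ℕ} (hjk : j ≤ k) {m : ι → ℤ} {x : ι → ℝ}
    (hx : x ∈ dyadicCube j m) : dyadicCube k (dyadicIndex k x) ⊆ dyadicCube j m := by
  obtain ⟨d, rfl⟩ := Nat.exists_eq_add_of_le hjk
  intro y hy
  rw [mem_dyadicCube] at hx hy ⊢
  ext i
  rw [← hx, ← dyadicIndex_div_two_pow j d y, ← dyadicIndex_div_two_pow j d x, hy]

lemma index_mem_Ico_of_dyadicCube_subset_unit {k : ℕ} {m : ι → ℤ}
    (hsub : dyadicCube k m ⊆ dyadicCube 0 0) (i : ι) : m i ∈ Ico 0 (2 ^ k) := by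
  have hcorner : dyadicIndex k (fun i => (m i : ℝ) / 2 ^ k) = m := by
    ext i
    rw [dyadicIndex, mul_div_cancel₀ _ (by positivity), Int.floor_intCast]
  have hindex := dyadicIndex_div_two_pow 0 k (fun i => (m i : ℝ) / 2 ^ k) i
  rw [zero_add, hcorner, mem_dyadicCube.1 (hsub hcorner), Pi.zero_apply] at hindex
  simpa using (Int.ediv_eq_iff_of_pos (by positivity)).1 hindex

/-- The indices of the dyadic subcubes of half the side length of the dyadic cube of index `m`. -/
def dyadicChildren (m : ι → ℤ) : Set (ι → ℤ) := {m' | ∀ i, m' i / 2 = m i}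

lemma dyadicCube_eq_biUnion_children (k : ℕ) (m : ι → ℤ) :
    dyadicCube k m = ⋃ m' ∈ dyadicChildren m, dyadicCube (k + 1) m' := by
  ext x
  have hparent := dyadicIndex_div_two_pow k 1 x
  simp only [pow_one] at hparent
  simp only [mem_iUnion₂, mem_dyadicCube, exists_prop, exists_eq_right', dyadicChildren,
    mem_ofPred_eq, hparent]
  exact funext_iff

lemma dyadicCube_subset_of_mem_children {k : ℕ} {m m' : ι → ℤ} (hm' : m' ∈ dyadicChildren m) :
    dyadicCube (k + 1) m' ⊆ dyadicCube k m := by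
  rw [dyadicCube_eq_biUnion_children k m]
  exact subset_biUnion_of_mem (u := fun m' => dyadicCube (k + 1) m') hm'

lemma measurable_dyadicIndex (k : ℕ) : Measurable (dyadicIndex k : (ι → ℝ) → ι → ℤ) :=
  measurable_pi_lambda _ fun i => ((measurable_pi_apply i).const_mul _).floor

lemma measurableSet_dyadicCube [Countable ι] (k : ℕ) (m : ι → ℤ) : MeasurableSet (dyadicCube k m) :=
  measurable_dyadicIndex k (measurableSet_singleton m)

variable [Fintype ι]

lemma dyadicCube_ae_eq_Icc (k : ℕ) (m : ι → ℤ) :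
    dyadicCube k m =ᵐ[volume]
      Icc (fun i => (m i : ℝ) / 2 ^ k) (fun i => ((m i : ℝ) + 1) / 2 ^ k) := by
  rw [dyadicCube_eq_pi]
  exact Measure.univ_pi_Ico_ae_eq_Icc

/-- The centre of the dyadic cube of side length `2⁻ᵏ` and index `m`. -/
def dyadicCenter (k : ℕ) (m : ι → ℤ) : ι → ℝ := fun i => ((m i : ℝ) + 1 / 2) / 2 ^ k

lemma closedBall_dyadicCenter (k : ℕ) (m : ι → ℤ) :
    Metric.closedBall (dyadicCenter k m) (1 / 2 / 2 ^ k) =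
      Icc (fun i => (m i : ℝ) / 2 ^ k) (fun i => ((m i : ℝ) + 1) / 2 ^ k) := by
  rw [closedBall_pi _ (by positivity), ← pi_univ_Icc]
  congr! 2 with i
  rw [Real.closedBall_eq_Icc, dyadicCenter]
  congr 1 <;> ring

lemma dyadicCube_subset_closedBall (k : ℕ) (m : ι → ℤ) :
    dyadicCube k m ⊆ Metric.closedBall (dyadicCenter k m) (1 / 2 / 2 ^ k) := by
  rw [closedBall_dyadicCenter, dyadicCube_eq_pi, ← pi_univ_Icc]
  exact pi_mono fun _ _ => Ico_subset_Icc_self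

lemma volume_dyadicCube (k : ℕ) (m : ι → ℤ) :
    volume (dyadicCube k m) = (2 ^ k)⁻¹ ^ Fintype.card ι := by
  rw [dyadicCube_eq_pi, volume_pi_pi]
  have hside (i : ι) : ((m i : ℝ) + 1) / 2 ^ k - m i / 2 ^ k = (2 ^ k)⁻¹ := by ring
  simp [hside, ENNReal.ofReal_inv_of_pos]

lemma volume_dyadicCube_eq_mul_child (k : ℕ) (m m' : ι → ℤ) :
    volume (dyadicCube k m) = 2 ^ Fintype.card ι * volume (dyadicCube (k + 1) m') := by
  rw [volume_dyadicCube, volume_dyadicCube, ← mul_pow, pow_succ,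
    ENNReal.mul_inv (by simp) (by simp), mul_left_comm,
    ENNReal.mul_inv_cancel two_ne_zero ENNReal.ofNat_ne_top, mul_one]

instance isFiniteMeasure_restrict_dyadicCube (k : ℕ) (m : ι → ℤ) :
    IsFiniteMeasure (volume.restrict (dyadicCube k m)) := by
  refine isFiniteMeasure_restrict.2 ?_
  rw [volume_dyadicCube]
  exact ENNReal.pow_ne_top (by simp)

lemma lintegral_dyadicCube_inter_eq_tsum_children (k : ℕ) (m : ι → ℤ) {s : Set (ι → ℝ)}
    (hs : MeasurableSet s) (g : (ι → ℝ) → ℝ≥0∞) :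
    ∫⁻ x in dyadicCube k m ∩ s, g x =
      ∑' m' : dyadicChildren m, ∫⁻ x in dyadicCube (k + 1) m' ∩ s, g x := by
  rw [dyadicCube_eq_biUnion_children, iUnion₂_inter]
  exact lintegral_biUnion (to_countable _) (fun m' _ => (measurableSet_dyadicCube _ m').inter hs)
    (fun _ _ _ _ hne =>
      (pairwise_disjoint_dyadicCube (k + 1) hne).mono inter_subset_left inter_subset_left) g

end DyadicCube

section DyadicAverage

variable {ι : Type*} [Fintype ι] {f : (ι → ℝ) → ℝ}

/-- The average of `f` over the dyadic cube of side length `2⁻ᵏ` containing `x`. -/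
def dyadicAverage (f : (ι → ℝ) → ℝ) (k : ℕ) (x : ι → ℝ) : ℝ :=
  ⨍ y in dyadicCube k (dyadicIndex k x), f y

lemma dyadicAverage_of_mem {k : ℕ} {m : ι → ℤ} {x : ι → ℝ} (hx : x ∈ dyadicCube k m) :
    dyadicAverage f k x = ⨍ y in dyadicCube k m, f y := by
  rw [dyadicAverage, mem_dyadicCube.1 hx]

lemma measurable_dyadicAverage (f : (ι → ℝ) → ℝ) (k : ℕ) : Measurable (dyadicAverage f k) :=
  (measurable_of_countable fun m => ⨍ y in dyadicCube k m, f y).comp (measurable_dyadicIndex k)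

theorem ae_tendsto_dyadicAverage (hf : LocallyIntegrable f) :
    ∀ᵐ x, Tendsto (fun k => dyadicAverage f k x) atTop (𝓝 (f x)) := by
  have hradius : Tendsto (fun k : ℕ => (1 / 2 / 2 ^ k : ℝ)) atTop (𝓝[>] 0) :=
    tendsto_nhdsWithin_iff.2
      ⟨tendsto_const_nhds.div_atTop (tendsto_pow_atTop_atTop_of_one_lt one_lt_two),
        .of_forall fun k => by simp⟩
  filter_upwards [IsUnifLocDoublingMeasure.ae_tendsto_average volume hf 1] with x hx
  refine (hx (fun k => dyadicCenter k (dyadicIndex k x)) _ hradius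
    (.of_forall fun k => ?_)).congr fun k => ?_
  · rw [one_mul]
    exact dyadicCube_subset_closedBall k _ (mem_dyadicCube.2 rfl)
  · rw [dyadicAverage, setAverage_congr (dyadicCube_ae_eq_Icc k _), closedBall_dyadicCenter]

theorem ae_restrict_tendsto_dyadicAverage {j : ℕ} {m : ι → ℤ}
    (hf : IntegrableOn f (dyadicCube j m)) :
    ∀ᵐ x ∂volume.restrict (dyadicCube j m),
      Tendsto (fun k => dyadicAverage f k x) atTop (𝓝 (f x)) := by
  have hQ := measurableSet_dyadicCube j m
  rw [ae_restrict_iff' hQ]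
  filter_upwards [ae_tendsto_dyadicAverage (hf.integrable_indicator hQ).locallyIntegrable]
    with x hlim hx
  rw [indicator_of_mem hx] at hlim
  refine hlim.congr' ((eventually_ge_atTop j).mono fun k hk => ?_)
  refine setAverage_congr_fun (measurableSet_dyadicCube k _) (.of_forall fun y hy => ?_)
  exact indicator_of_mem (dyadicCube_subset_of_mem hk hx hy) f

end DyadicAverage

section GurovReshetnyak

variable {ι : Type*} [Fintype ι] {f : (ι → ℝ) → ℝ} {ε : ℝ}

/-- The Gurov–Reshetnyak condition `Ω(f, Q) ≤ ε f_Q` for all half-open dyadic cubes `Q ⊆ s`. -/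
def IsDyadicGR (f : (ι → ℝ) → ℝ) (ε : ℝ) (s : Set (ι → ℝ)) : Prop :=
  ∀ k m, dyadicCube k m ⊆ s →
    ⨍ x in dyadicCube k m, |f x - ⨍ y in dyadicCube k m, f y| ≤ ε * ⨍ x in dyadicCube k m, f x

lemma IsDyadicGR.mono {s t : Set (ι → ℝ)} (h : IsDyadicGR f ε t) (hst : s ⊆ t) :
    IsDyadicGR f ε s :=
  fun k m hsub => h k m (hsub.trans hst)

variable {k : ℕ} {m : ι → ℤ} {s l : ℝ}

lemma IsDyadicGR.excess_le_of_child_average_gt (h : IsDyadicGR f ε (dyadicCube k m))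
    (hf : IntegrableOn f (dyadicCube k m)) (hε : 0 ≤ ε) (hsl : s < l) (hl : 0 ≤ l)
    (havg : ⨍ x in dyadicCube k m, f x ≤ l) {m' : ι → ℤ} (hm' : m' ∈ dyadicChildren m)
    (havg' : l < ⨍ x in dyadicCube (k + 1) m', f x) :
    excess (volume.restrict (dyadicCube k m)) f l ≤
      ENNReal.ofReal (2 ^ Fintype.card ι * ε / 2 * (l / (l - s))) *
        excess (volume.restrict (dyadicCube k m)) f s := by
  have hls : 0 < l - s := sub_pos.2 hsl
  have hsub := dyadicCube_subset_of_mem_children (k := k) hm'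
  set Q := dyadicCube k m
  set Q' := dyadicCube (k + 1) m'
  calc excess (volume.restrict Q) f l
      ≤ ENNReal.ofReal (ε / 2 * l) * volume Q := by
        simpa using excess_le_of_average_abs_sub_le hf hε (h k m subset_rfl) havg
    _ = ENNReal.ofReal (2 ^ Fintype.card ι * ε / 2 * (l / (l - s))) *
          (ENNReal.ofReal (l - s) * volume Q') := by
        have hconst : 2 ^ Fintype.card ι * ε / 2 * (l / (l - s)) * (l - s) =
            ε / 2 * l * 2 ^ Fintype.card ι := by field_simp
        rw [← mul_assoc, ← ENNReal.ofReal_mul (by positivity), hconst,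
          ENNReal.ofReal_mul (p := ε / 2 * l) (by positivity), ENNReal.ofReal_pow zero_le_two,
          ENNReal.ofReal_ofNat, mul_assoc, volume_dyadicCube_eq_mul_child k m m']
    _ ≤ ENNReal.ofReal (2 ^ Fintype.card ι * ε / 2 * (l / (l - s))) *
          excess (volume.restrict Q') f s := by
        gcongr
        refine le_trans ?_ (ofReal_average_sub_mul_le_excess (hf.mono_set hsub) s)
        rw [Measure.restrict_apply_univ]
        gcongr
    _ ≤ _ := by
        gcongr
        exact excess_mono_measure (Measure.restrict_mono_set _ hsub) s

-- Descending from `Q`, stop at the first cubes having a child with average above `l`.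
lemma IsDyadicGR.excess_inter_dyadicAverage_gt_le (hε : 0 ≤ ε) (hsl : s < l) (hl : 0 ≤ l) (d : ℕ)
    (h : IsDyadicGR f ε (dyadicCube k m)) (hf : IntegrableOn f (dyadicCube k m))
    (havg : ⨍ x in dyadicCube k m, f x ≤ l) :
    excess (volume.restrict (dyadicCube k m ∩ {x | l < dyadicAverage f (k + d) x})) f l ≤
      ENNReal.ofReal (2 ^ Fintype.card ι * ε / 2 * (l / (l - s))) *
        excess (volume.restrict (dyadicCube k m)) f s := by
  induction d generalizing k m with
  | zero =>
    have hempty : dyadicCube k m ∩ {x | l < dyadicAverage f (k + 0) x} = ∅ := by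
      refine eq_empty_of_forall_notMem fun x ⟨hx, hlt⟩ => ?_
      exact (havg.trans_lt hlt).ne (dyadicAverage_of_mem hx).symm
    rw [hempty, Measure.restrict_empty, excess, lintegral_zero_measure]
    exact zero_le
  | succ d ih =>
    by_cases hchild : ∃ m' ∈ dyadicChildren m, l < ⨍ x in dyadicCube (k + 1) m', f x
    · obtain ⟨m', hm', havg'⟩ := hchild
      exact (excess_mono_measure (Measure.restrict_mono_set _ inter_subset_left) l).trans
        (h.excess_le_of_child_average_gt hf hε hsl hl havg hm' havg')
    · push Not at hchild
      have hmeas : MeasurableSet {x | l < dyadicAverage f (k + (d + 1)) x} :=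
        measurableSet_lt measurable_const (measurable_dyadicAverage f _)
      have hsplit := lintegral_dyadicCube_inter_eq_tsum_children k m MeasurableSet.univ
        fun x => ENNReal.ofReal (f x - s)
      simp only [inter_univ] at hsplit
      rw [excess, excess, lintegral_dyadicCube_inter_eq_tsum_children k m hmeas, hsplit,
        ← ENNReal.tsum_mul_left]
      refine ENNReal.tsum_le_tsum fun ⟨m', hm'⟩ => ?_
      have hsub := dyadicCube_subset_of_mem_children (k := k) hm'
      simpa only [excess, add_assoc, add_comm 1 d] using
        ih (h.mono hsub) (hf.mono_set hsub) (hchild m' hm')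

lemma excess_le_liminf_excess_inter_dyadicAverage_gt (hf : IntegrableOn f (dyadicCube k m)) :
    excess (volume.restrict (dyadicCube k m)) f l ≤
      liminf (fun d => excess (volume.restrict
        (dyadicCube k m ∩ {x | l < dyadicAverage f (k + d) x})) f l) atTop := by
  have hmeas (d : ℕ) : MeasurableSet {x | l < dyadicAverage f (k + d) x} :=
    measurableSet_lt measurable_const (measurable_dyadicAverage f _)
  have hind (d : ℕ) : excess (volume.restrict
      (dyadicCube k m ∩ {x | l < dyadicAverage f (k + d) x})) f l =
      ∫⁻ x in dyadicCube k m, {x | l < dyadicAverage f (k + d) x}.indicator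
        (fun x => ENNReal.ofReal (f x - l)) x := by
    rw [excess, inter_comm, setLIntegral_indicator (hmeas d)]
  simp only [hind]
  refine le_trans (lintegral_mono_ae ?_) (lintegral_liminf_le' fun d =>
    (hf.aemeasurable.sub_const l).ennreal_ofReal.indicator (hmeas d))
  filter_upwards [ae_restrict_tendsto_dyadicAverage hf] with x hlim
  rcases le_or_gt (f x) l with hfl | hlf
  · simp [ENNReal.ofReal_of_nonpos (sub_nonpos.2 hfl)]
  · refine le_liminf_of_le (by isBoundedDefault) ?_
    have hlim' := hlim.comp (tendsto_add_atTop_nat k)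
    filter_upwards [hlim'.eventually_const_lt hlf] with d hd
    rw [indicator_of_mem (by simpa [add_comm k] using hd)]

theorem IsDyadicGR.excess_le (h : IsDyadicGR f ε (dyadicCube k m))
    (hf : IntegrableOn f (dyadicCube k m)) (hε : 0 ≤ ε) (hsl : s < l) (hl : 0 ≤ l)
    (havg : ⨍ x in dyadicCube k m, f x ≤ l) :
    excess (volume.restrict (dyadicCube k m)) f l ≤
      ENNReal.ofReal (2 ^ Fintype.card ι * ε / 2 * (l / (l - s))) *
        excess (volume.restrict (dyadicCube k m)) f s :=
  (excess_le_liminf_excess_inter_dyadicAverage_gt hf).trans <|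
    (liminf_le_liminf (.of_forall fun d =>
      h.excess_inter_dyadicAverage_gt_le hε hsl hl d hf havg)).trans (liminf_const _).le

theorem IsDyadicGR.integrableOn_rpow (h : IsDyadicGR f ε (dyadicCube k m))
    (hf : IntegrableOn f (dyadicCube k m)) (hf₀ : 0 ≤ᵐ[volume.restrict (dyadicCube k m)] f)
    (hε : 0 ≤ ε) {c q : ℝ} (hc : 1 < c) (hq : 1 ≤ q)
    (hlt : c ^ (q - 1) * (2 ^ Fintype.card ι * ε / 2 * (c / (c - 1))) < 1) :
    IntegrableOn (fun x => f x ^ q) (dyadicCube k m) := by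
  set a := ⨍ x in dyadicCube k m, f x
  refine integrable_rpow_of_excess_decay (t₀ := max a 1) hf hf₀ hc (by positivity) hq
    (C := ENNReal.ofReal (2 ^ Fintype.card ι * ε / 2 * (c / (c - 1)))) ?_ fun t ht => ?_
  · rwa [← ENNReal.ofReal_mul (by positivity), ENNReal.ofReal_lt_one]
  · have ht₀ : 0 < t := zero_lt_one.trans_le ((le_max_right a 1).trans ht)
    have htc : t < c * t := lt_mul_of_one_lt_left ht₀ hc
    have hratio : c * t / (c * t - t) = c / (c - 1) := by
      rw [← sub_one_mul, mul_div_mul_right _ _ ht₀.ne']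
    rw [← hratio]
    exact h.excess_le hf hε htc (by positivity) (((le_max_left a 1).trans ht).trans htc.le)

end GurovReshetnyak

section UnitCube

variable {n : ℕ} {f : (Fin n → ℝ) → ℝ} {ε : ℝ}

lemma avgOn_eq_setAverage (f : (Fin n → ℝ) → ℝ) (Q : Set (Fin n → ℝ)) :
    avgOn f Q = ⨍ x in Q, f x := by
  rw [setAverage_eq, avgOn, measureReal_def, smul_eq_mul]

lemma oscOn_eq_setAverage (f : (Fin n → ℝ) → ℝ) (Q : Set (Fin n → ℝ)) :
    oscOn f Q = ⨍ x in Q, |f x - ⨍ y in Q, f y| := by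
  rw [setAverage_eq, oscOn, measureReal_def, smul_eq_mul, avgOn_eq_setAverage]

lemma dyadicCube_zero_ae_eq_Q0 (n : ℕ) : dyadicCube 0 (0 : Fin n → ℤ) =ᵐ[volume] Q0 n := by
  refine (dyadicCube_ae_eq_Icc 0 0).trans (Eq.eventuallyEq ?_)
  simp only [Q0, Pi.zero_apply, Int.cast_zero, pow_zero, zero_add, div_one]
  rfl

lemma GRcond.isDyadicGR (hf : GRcond f ε) : IsDyadicGR f ε (dyadicCube 0 0) := by
  intro k m hsub
  have hm := index_mem_Ico_of_dyadicCube_subset_unit hsub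
  lift m to Fin n → ℕ using fun i => (hm i).1
  have hosc := hf.2.2 _ ⟨k, m, fun i => Int.ofNat_lt.1 (by simpa using (hm i).2), rfl⟩
  rw [oscOn_eq_setAverage, avgOn_eq_setAverage] at hosc
  have hae := dyadicCube_ae_eq_Icc k fun i => (m i : ℤ)
  simp only [Int.cast_natCast] at hae
  simpa only [setAverage_congr hae] using hosc

end UnitCube

-- `c = p / (p - 1)` minimises `c ↦ c ^ p / (c - 1)`, with minimum `p ^ p / (p - 1) ^ (p - 1)`.
lemma rpow_mul_div_lt_one {p q θ : ℝ} (hp : 1 < p) (hqp : q < p)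
    (hθ : p ^ p / (p - 1) ^ (p - 1) = 1 / θ) :
    (p / (p - 1)) ^ (q - 1) * (θ * (p / (p - 1) / (p / (p - 1) - 1))) < 1 := by
  have hp₀ : 0 < p := zero_lt_one.trans hp
  have hp₁ : 0 < p - 1 := sub_pos.2 hp
  have hc : 1 < p / (p - 1) := (one_lt_div hp₁).2 (sub_one_lt p)
  have hconj : p / (p - 1) / (p / (p - 1) - 1) = p := by field_simp; ring
  have hθp : θ * p = (p / (p - 1)) ^ (1 - p) := by
    rw [← one_div_one_div θ, ← hθ, ← neg_sub p 1, Real.rpow_neg (by positivity),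
      Real.div_rpow hp₀.le hp₁.le, Real.rpow_sub_one hp₀.ne']
    field_simp
  rw [hconj, hθp, ← Real.rpow_add (by positivity)]
  exact Real.rpow_lt_one_of_one_lt_of_neg hc (by linarith)

/-- **Corollary 1.** If `f ∈ GR_𝒟(Q₀,ε)` with `ε ∈ (0, 1/2ⁿ⁻¹)` and `p > 1` satisfies
`pᵖ/(p−1)^{p−1} = 1/(2ⁿ⁻¹ε)`, then `f ∈ L^q(Q₀)` for every `q ∈ [1,p)`. -/
theorem GR_integrability (n : ℕ) (hn : 1 ≤ n)
    (ε : ℝ) (hε : ε ∈ Set.Ioo 0 (1 / 2 ^ (n - 1)))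
    (f : (Fin n → ℝ) → ℝ) (hf : GRcond f ε)
    (p : ℝ) (hp : 1 < p)
    (hpeq : p ^ p / (p - 1) ^ (p - 1) = 1 / (2 ^ (n - 1) * ε)) :
    ∀ q ∈ Set.Ico (1:ℝ) p, IntegrableOn (fun x => f x ^ q) (Q0 n) := by
  rintro q ⟨hq, hqp⟩
  have hunit := dyadicCube_zero_ae_eq_Q0 n
  have hθ : 2 ^ (n - 1) * ε = 2 ^ Fintype.card (Fin n) * ε / 2 := by
    rw [Fintype.card_fin, ← Nat.sub_add_cancel hn, pow_succ, Nat.add_sub_cancel]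
    ring
  have hf₀ : 0 ≤ᵐ[volume.restrict (dyadicCube 0 0)] f := by
    rw [Measure.restrict_congr_set hunit]
    exact ae_restrict_of_forall_mem measurableSet_Icc hf.2.1
  rw [hθ] at hpeq
  have hc : 1 < p / (p - 1) := (one_lt_div (sub_pos.2 hp)).2 (sub_one_lt p)
  exact (hf.isDyadicGR.integrableOn_rpow (hf.1.congr_set_ae hunit) hf₀ hε.1.le hc hq
    (rpow_mul_div_lt_one hp hqp hpeq)).congr_set_ae hunit.symm
end
end

section
/- Let f : I1 = [a1,b1] → ℝ be monotone and integrable on I1, and let I = [a,b] ⊆ I1 be a subinterval with b > a such that f_I = f_{I1}. Then Ω(f,I) ≤ Ω(f,I1). -/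
open MeasureTheory Set Real

noncomputable section

/-!
Let `m` be the common average and let `u ≤ v` be the values of `f` at the endpoints of `I`. By
monotonicity `f` takes values in `[u, v]` on `I`, and outside `(u, v)` on `I₁ \ I`. A convex
function `φ` lies below its chord `L` over `[u, v]` inside that interval and above `L` outside it,
so `φ ∘ f - L ∘ f` is nonpositive on `I` and nonnegative on `I₁ \ I`. Its average over `I` is
therefore at most its average over `I₁`. As `L ∘ f` has the same average `L m` over both intervals,
the average of `φ ∘ f` over `I` is at most that over `I₁`. The oscillation is the case
`φ y = |y - m|`.
-/

/-- Such a `β` is the slope of the chord over `[u, v]` if `u < v`, and of a supporting line at `u`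
if `u = v`. -/
theorem exists_slope_le_and_le_slope_of_convexOn {φ : ℝ → ℝ} (hφ : ConvexOn ℝ univ φ) {u v : ℝ}
    (huv : u ≤ v) :
    ∃ β, (∀ y ≤ v, y ≠ u → slope φ u y ≤ β) ∧ ∀ y ≥ v, y ≠ u → β ≤ slope φ u y := by
  have nonempty_left : (Iic v \ {u}).Nonempty :=
    ⟨u - 1, (sub_one_lt u).le.trans huv, (sub_one_lt u).ne⟩
  have nonempty_right : (Ici v \ {u}).Nonempty :=
    ⟨v + 1, (lt_add_one v).le, (huv.trans_lt (lt_add_one v)).ne'⟩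
  have slope_le_slope : ∀ p ∈ (Iic v \ {u}).image (slope φ u),
      ∀ q ∈ (Ici v \ {u}).image (slope φ u), p ≤ q := by
    rintro _ ⟨y, ⟨hyv, hyu⟩, rfl⟩ _ ⟨z, ⟨hvz, hzu⟩, rfl⟩
    exact hφ.slope_mono (mem_univ u) ⟨mem_univ y, hyu⟩ ⟨mem_univ z, hzu⟩ (hyv.trans hvz)
  obtain ⟨β, hβ_ge, hβ_le⟩ := exists_between_of_forall_le
    (nonempty_left.image _) (nonempty_right.image _) slope_le_slope
  exact ⟨β, fun y hyv hyu => hβ_ge ⟨y, ⟨hyv, hyu⟩, rfl⟩,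
    fun y hvy hyu => hβ_le ⟨y, ⟨hvy, hyu⟩, rfl⟩⟩

theorem exists_line_ge_on_Icc_le_off_Ioo_of_convexOn {φ : ℝ → ℝ} (hφ : ConvexOn ℝ univ φ)
    {u v : ℝ} (huv : u ≤ v) :
    ∃ β, (∀ y ∈ Icc u v, φ y ≤ φ u + β * (y - u)) ∧ ∀ y ∉ Ioo u v, φ u + β * (y - u) ≤ φ y := by
  obtain ⟨β, slope_le, le_slope⟩ := exists_slope_le_and_le_slope_of_convexOn hφ huv
  have hφ_eq (y : ℝ) : φ y = φ u + slope φ u y * (y - u) := by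
    rw [mul_comm, ← smul_eq_mul, sub_smul_slope, vsub_eq_sub, add_sub_cancel]
  refine ⟨β, fun y hy => ?_, fun y hy => ?_⟩ <;> rw [hφ_eq y, add_le_add_iff_left]
  · rcases hy.1.eq_or_lt with rfl | huy
    · simp
    · exact mul_le_mul_of_nonneg_right (slope_le y hy.2 huy.ne') (sub_nonneg.2 huy.le)
  · rcases lt_trichotomy y u with hyu | rfl | huy
    · exact mul_le_mul_of_nonpos_right (slope_le y (hyu.le.trans huv) hyu.ne)
        (sub_nonpos.2 hyu.le)
    · simp
    · have hvy : v ≤ y := not_lt.1 fun hyv => hy ⟨huy, hyv⟩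
      exact mul_le_mul_of_nonneg_right (le_slope y hvy huy.ne') (sub_nonneg.2 huy.le)

section Average

variable {α : Type*} [MeasurableSpace α] {μ : Measure α} {s t : Set α}

theorem setAverage_sub_pointSlope {f g : α → ℝ} (hμ₀ : μ s ≠ 0) (hμ : μ s ≠ ⊤)
    (hg : IntegrableOn g s μ) (hf : IntegrableOn f s μ) (c β u : ℝ) :
    ⨍ x in s, (g x - (c + β * (f x - u))) ∂μ =
      ⨍ x in s, g x ∂μ - (c + β * (⨍ x in s, f x ∂μ - u)) := by
  have hconst (k : ℝ) : IntegrableOn (fun _ => k) s μ := integrableOn_const hμ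
  have hmul : IntegrableOn (fun x => β * (f x - u)) s μ := (hf.sub (hconst u)).const_mul β
  have hline : IntegrableOn (fun x => c + β * (f x - u)) s μ := (hconst c).add hmul
  have hμ_real : μ.real s ≠ 0 := (measureReal_ne_zero_iff hμ).2 hμ₀
  simp only [setAverage_eq, smul_eq_mul]
  rw [integral_sub hg hline, integral_add (hconst c) hmul, integral_const_mul,
    integral_sub hf (hconst u), setIntegral_const, setIntegral_const]
  simp only [smul_eq_mul]
  field_simp

theorem setAverage_le_setAverage_of_nonpos_of_nonneg_diff {ψ : α → ℝ}
    (hs : MeasurableSet s) (ht : MeasurableSet t) (hst : s ⊆ t) (hμs : μ s ≠ 0) (hμt : μ t ≠ ⊤)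
    (hψ : IntegrableOn ψ t μ) (hψ_nonpos : ∀ x ∈ s, ψ x ≤ 0) (hψ_nonneg : ∀ x ∈ t \ s, 0 ≤ ψ x) :
    ⨍ x in s, ψ x ∂μ ≤ ⨍ x in t, ψ x ∂μ := by
  have hμs_pos : 0 < μ.real s := ENNReal.toReal_pos hμs (measure_ne_top_of_subset hst hμt)
  have hdiff : 0 ≤ ∫ x in t \ s, ψ x ∂μ := setIntegral_nonneg (ht.diff hs) hψ_nonneg
  rw [setIntegral_sdiff hs hψ hst, sub_nonneg] at hdiff
  simp only [setAverage_eq, smul_eq_mul]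
  calc (μ.real s)⁻¹ * ∫ x in s, ψ x ∂μ
      ≤ (μ.real t)⁻¹ * ∫ x in s, ψ x ∂μ :=
        mul_le_mul_of_nonpos_right (inv_anti₀ hμs_pos (measureReal_mono hst hμt))
          (setIntegral_nonpos hs hψ_nonpos)
    _ ≤ (μ.real t)⁻¹ * ∫ x in t, ψ x ∂μ := by gcongr

theorem setAverage_comp_le_setAverage_comp_of_convexOn {φ : ℝ → ℝ} {f : α → ℝ} {u v : ℝ}
    (hφ : ConvexOn ℝ univ φ) (hs : MeasurableSet s) (ht : MeasurableSet t) (hst : s ⊆ t)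
    (hμs : μ s ≠ 0) (hμt : μ t ≠ ⊤) (hf : IntegrableOn f t μ)
    (hφf : IntegrableOn (fun x => φ (f x)) t μ)
    (hf_mem : MapsTo f s (Icc u v)) (hf_notMem : MapsTo f (t \ s) (Ioo u v)ᶜ)
    (havg : ⨍ x in s, f x ∂μ = ⨍ x in t, f x ∂μ) :
    ⨍ x in s, φ (f x) ∂μ ≤ ⨍ x in t, φ (f x) ∂μ := by
  obtain ⟨x₀, hx₀⟩ := nonempty_of_measure_ne_zero hμs
  have huv : u ≤ v := (hf_mem hx₀).1.trans (hf_mem hx₀).2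
  obtain ⟨β, hφ_le, hφ_ge⟩ := exists_line_ge_on_Icc_le_off_Ioo_of_convexOn hφ huv
  have hψ : IntegrableOn (fun x => φ (f x) - (φ u + β * (f x - u))) t μ :=
    hφf.sub ((integrableOn_const hμt).add ((hf.sub (integrableOn_const hμt)).const_mul β))
  have hψ_avg := setAverage_le_setAverage_of_nonpos_of_nonneg_diff hs ht hst hμs hμt hψ
    (fun x hx => sub_nonpos.2 (hφ_le _ (hf_mem hx)))
    (fun x hx => sub_nonneg.2 (hφ_ge _ (hf_notMem hx)))
  rw [setAverage_sub_pointSlope hμs (measure_ne_top_of_subset hst hμt) (hφf.mono_set hst)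
      (hf.mono_set hst),
    setAverage_sub_pointSlope (fun h => hμs (measure_mono_null hst h)) hμt hφf hf, havg] at hψ_avg
  exact (sub_le_sub_iff_right _).1 hψ_avg

end Average

theorem exists_mapsTo_Icc_mapsTo_compl_Ioo {α β : Type*} [LinearOrder α] [Preorder β] {f : α → β}
    {t : Set α} {a b : α} (hf : MonotoneOn f t ∨ AntitoneOn f t) (hab : a ≤ b)
    (hst : Icc a b ⊆ t) :
    ∃ u v, MapsTo f (Icc a b) (Icc u v) ∧ MapsTo f (t \ Icc a b) (Ioo u v)ᶜ := by
  have ha : a ∈ t := hst (left_mem_Icc.2 hab)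
  have hb : b ∈ t := hst (right_mem_Icc.2 hab)
  have lt_or_lt {x : α} (hx : x ∉ Icc a b) : x < a ∨ b < x := by
    simpa only [mem_Icc, not_and_or, not_le] using hx
  rcases hf with hf | hf
  · refine ⟨f a, f b, (hf.mono hst).mapsTo_Icc, fun x ⟨hxt, hx⟩ hfx => ?_⟩
    rcases lt_or_lt hx with hxa | hbx
    · exact (hf hxt ha hxa.le).not_gt hfx.1
    · exact (hf hb hxt hbx.le).not_gt hfx.2
  · refine ⟨f b, f a, (hf.mono hst).mapsTo_Icc, fun x ⟨hxt, hx⟩ hfx => ?_⟩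
    rcases lt_or_lt hx with hxa | hbx
    · exact (hf hxt ha hxa.le).not_gt hfx.2
    · exact (hf hb hxt hbx.le).not_gt hfx.1

theorem osc_monotone_subinterval_general {α : Type*} [LinearOrder α] [TopologicalSpace α]
    [OrderClosedTopology α] [MeasurableSpace α] [OpensMeasurableSpace α] {μ : Measure α}
    {f : α → ℝ} {t : Set α} {a b : α} (ht : MeasurableSet t) (hst : Icc a b ⊆ t)
    (hμs : μ (Icc a b) ≠ 0) (hμt : μ t ≠ ⊤) (hmono : MonotoneOn f t ∨ AntitoneOn f t)
    (hf : IntegrableOn f t μ) (havg : ⨍ x in Icc a b, f x ∂μ = ⨍ x in t, f x ∂μ) :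
    ⨍ x in Icc a b, |f x - ⨍ y in Icc a b, f y ∂μ| ∂μ ≤ ⨍ x in t, |f x - ⨍ y in t, f y ∂μ| ∂μ := by
  have hab : a ≤ b := nonempty_Icc.1 (nonempty_of_measure_ne_zero hμs)
  obtain ⟨u, v, hf_mem, hf_notMem⟩ := exists_mapsTo_Icc_mapsTo_compl_Ioo hmono hab hst
  rw [havg]
  exact setAverage_comp_le_setAverage_comp_of_convexOn (φ := fun y => |y - ⨍ x in t, f x ∂μ|)
    (convexOn_univ_dist _) measurableSet_Icc ht hst hμs hμt hf
    (hf.sub (integrableOn_const hμt)).abs hf_mem hf_notMem havg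

theorem avgI_eq_setAverage (g : ℝ → ℝ) (J : Set ℝ) : avgI g J = ⨍ x in J, g x :=
  (setAverage_eq volume g J).symm

theorem oscI_eq_setAverage (g : ℝ → ℝ) (J : Set ℝ) :
    oscI g J = ⨍ x in J, |g x - ⨍ y in J, g y| := by
  rw [← avgI_eq_setAverage g J]
  exact avgI_eq_setAverage (fun x => |g x - avgI g J|) J

/-- **Lemma 2.2.** If `f` is monotone and integrable on `I₁ = [a₁,b₁]` and `I = [a,b] ⊆ I₁`
is a nondegenerate subinterval with `f_I = f_{I₁}`, then `Ω(f,I) ≤ Ω(f,I₁)`. -/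
theorem osc_monotone_subinterval (f : ℝ → ℝ) (a1 b1 a b : ℝ)
    (h1 : a1 ≤ a) (hab : a < b) (h2 : b ≤ b1)
    (hmono : MonotoneOn f (Set.Icc a1 b1) ∨ AntitoneOn f (Set.Icc a1 b1))
    (hf : IntegrableOn f (Set.Icc a1 b1))
    (havg : avgI f (Set.Icc a b) = avgI f (Set.Icc a1 b1)) :
    oscI f (Set.Icc a b) ≤ oscI f (Set.Icc a1 b1) := by
  simp only [avgI_eq_setAverage, oscI_eq_setAverage] at havg ⊢
  exact osc_monotone_subinterval_general measurableSet_Icc (Icc_subset_Icc h1 h2)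
    (by simpa using hab) measure_Icc_lt_top.ne hmono hf havg
end
end

section
/- Let f be a nonincreasing, integrable function on (0,1] and set F(t) = (1/t)∫_0^t f(u)du for t ∈ (0,1]. Then for every constant γ > 1 and every t ∈ (0,1], F(t/γ) − F(t) ≤ (γ/2) · (1/t)∫_0^t |f(u) − F(t)| du. -/
open MeasureTheory Set Real

noncomputable section

/-! A function of mean zero has opposite integrals over a set and over its complement, so each is
bounded by half of the `L¹` norm. Applied to `f - ⨍ f` this bounds the change of the average when
passing to a subset by the mean oscillation times half the ratio of the measures. -/

section Average

variable {α E : Type*} [MeasurableSpace α] {μ : Measure α} [NormedAddCommGroup E] [NormedSpace ℝ E]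

theorem two_mul_norm_setIntegral_le_of_integral_eq_zero {g : α → E} {s : Set α}
    (hg : Integrable g μ) (hs : MeasurableSet s) (hg_zero : ∫ x, g x ∂μ = 0) :
    2 * ‖∫ x in s, g x ∂μ‖ ≤ ∫ x, ‖g x‖ ∂μ := by
  have integral_compl : ∫ x in sᶜ, g x ∂μ = -∫ x in s, g x ∂μ := by
    rw [setIntegral_compl hs hg, hg_zero, zero_sub]
  calc
    2 * ‖∫ x in s, g x ∂μ‖ = ‖∫ x in s, g x ∂μ‖ + ‖∫ x in sᶜ, g x ∂μ‖ := by
      rw [integral_compl, norm_neg, two_mul]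
    _ ≤ (∫ x in s, ‖g x‖ ∂μ) + ∫ x in sᶜ, ‖g x‖ ∂μ :=
      add_le_add (norm_integral_le_integral_norm _) (norm_integral_le_integral_norm _)
    _ = ∫ x, ‖g x‖ ∂μ := integral_add_compl hs hg.norm

variable [CompleteSpace E] {f : α → E} {s t : Set α}

theorem setAverage_sub_const (hf : IntegrableOn f s μ) (hs₀ : μ s ≠ 0) (hs : μ s ≠ ⊤) (c : E) :
    ⨍ x in s, (f x - c) ∂μ = (⨍ x in s, f x ∂μ) - c := by
  rw [setAverage_eq, integral_sub hf (integrableOn_const hs), smul_sub, ← setAverage_eq,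
    ← setAverage_eq, setAverage_const hs₀ hs]

theorem two_mul_norm_setIntegral_sub_setAverage_le (hf : IntegrableOn f t μ)
    (hs : MeasurableSet s) (hst : s ⊆ t) (ht : μ t ≠ ⊤) :
    2 * ‖∫ x in s, (f x - ⨍ y in t, f y ∂μ) ∂μ‖ ≤ ∫ x in t, ‖f x - ⨍ y in t, f y ∂μ‖ ∂μ := by
  rw [← Measure.restrict_restrict_of_subset hst]
  exact two_mul_norm_setIntegral_le_of_integral_eq_zero (hf.sub (integrableOn_const ht)) hs
    (setAverage_sub_setAverage ht f)

theorem norm_setAverage_sub_setAverage_le (hf : IntegrableOn f t μ) (hs : MeasurableSet s)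
    (hst : s ⊆ t) (hs₀ : μ s ≠ 0) (ht : μ t ≠ ⊤) :
    ‖(⨍ x in s, f x ∂μ) - ⨍ x in t, f x ∂μ‖ ≤
      μ.real t / μ.real s / 2 * ⨍ x in t, ‖f x - ⨍ y in t, f y ∂μ‖ ∂μ := by
  have hs_top : μ s ≠ ⊤ := measure_ne_top_of_subset hst ht
  calc
    ‖(⨍ x in s, f x ∂μ) - ⨍ x in t, f x ∂μ‖
      = (μ.real s)⁻¹ * ‖∫ x in s, (f x - ⨍ y in t, f y ∂μ) ∂μ‖ := by
        rw [← setAverage_sub_const (hf.mono_set hst) hs₀ hs_top, setAverage_eq, norm_smul,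
          norm_inv, Real.norm_of_nonneg measureReal_nonneg]
    _ ≤ (μ.real s)⁻¹ * ((∫ x in t, ‖f x - ⨍ y in t, f y ∂μ‖ ∂μ) / 2) := by
        gcongr
        linarith only [two_mul_norm_setIntegral_sub_setAverage_le hf hs hst ht]
    _ = μ.real t / μ.real s / 2 * ⨍ x in t, ‖f x - ⨍ y in t, f y ∂μ‖ ∂μ := by
        rw [← measure_smul_setAverage _ ht, smul_eq_mul]
        ring

end Average

theorem hardyAvg_eq_setAverage (g : ℝ → ℝ) {t : ℝ} (ht : 0 ≤ t) :
    hardyAvg g t = ⨍ u in Ioc 0 t, g u := by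
  rw [hardyAvg, setAverage_eq, Real.volume_real_Ioc_of_le ht, sub_zero, smul_eq_mul]

theorem hardy_average_difference_general {f : ℝ → ℝ} {γ t : ℝ} (hf : IntegrableOn f (Ioc 0 t))
    (hγ : 1 ≤ γ) (ht : 0 < t) :
    |hardyAvg f (t / γ) - hardyAvg f t| ≤
      γ / 2 * (t⁻¹ * ∫ u in Ioc 0 t, |f u - hardyAvg f t|) := by
  have hγ_pos : 0 < γ := one_pos.trans_le hγ
  have htγ : 0 < t / γ := div_pos ht hγ_pos
  have measure_ratio : volume.real (Ioc 0 t) / volume.real (Ioc 0 (t / γ)) = γ := by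
    rw [Real.volume_real_Ioc_of_le ht.le, Real.volume_real_Ioc_of_le htγ.le, sub_zero, sub_zero,
      div_div_cancel₀ ht.ne']
  change |_| ≤ γ / 2 * hardyAvg (fun u => |f u - hardyAvg f t|) t
  rw [hardyAvg_eq_setAverage f htγ.le, hardyAvg_eq_setAverage f ht.le,
    hardyAvg_eq_setAverage _ ht.le]
  simpa only [measure_ratio, Real.norm_eq_abs] using norm_setAverage_sub_setAverage_le hf
    measurableSet_Ioc (Ioc_subset_Ioc_right (div_le_self ht.le hγ)) (by simpa using htγ)
    measure_Ioc_lt_top.ne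

/-- **Lemma 2.3.** If `f` is nonincreasing and integrable on `(0,1]` and
`F(t) = (1/t) ∫_0^t f(u) du`, then for every `γ > 1` and `t ∈ (0,1]`,
`F(t/γ) − F(t) ≤ (γ/2) (1/t) ∫_0^t |f(u) − F(t)| du`. -/
theorem hardy_average_difference (f : ℝ → ℝ)
    (hmono : AntitoneOn f (Set.Ioc 0 1))
    (hf : IntegrableOn f (Set.Ioc 0 1))
    (γ : ℝ) (hγ : 1 < γ) :
    ∀ t ∈ Set.Ioc (0:ℝ) 1,
      hardyAvg f (t / γ) - hardyAvg f t ≤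
        γ / 2 * (t⁻¹ * ∫ u in Set.Ioc (0:ℝ) t, |f u - hardyAvg f t|) :=
  fun _ ht => (le_abs_self _).trans <| hardy_average_difference_general
    (hf.mono_set (Ioc_subset_Ioc_right ht.2)) hγ.le ht.1
end
end

section
/- Let f : Q0 = [0,1]^n → [0,∞) be integrable with finite dyadic BMO seminorm ‖f‖_{*,D}. Then its nonincreasing rearrangement f^* satisfies ‖f^*‖_* ≤ 2^n ‖f‖_{*,D}, i.e. for every subinterval J ⊆ (0,1] with |J| > 0, (1/|J|)∫_J |f^*(u) − (f^*)_J| du ≤ 2^n ‖f‖_{*,D}. -/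
open MeasureTheory Set Real

noncomputable section

/-!
For a height `α` at least the mean of `f`, stop at the maximal dyadic cubes `P` having a child of
average greater than `α`. The average over `P` itself is at most `α`, so
`∫_P (f - α)⁺ ≤ |P| Ω(f, P) / 2`, and `|P|` is `2ⁿ` times the volume of the selected child. Hence
the union `E` of the selected children satisfies `∫ (f - α)⁺ ≤ 2ⁿ M |E| / 2` and has average at
least `α`.

Take `α` to be the average of the rearrangement `g` over an interval `J`. By Hardy–Littlewood, the
average of `g` over `(0, |E|)` is also at least `α`, and monotonicity of `g` then gives
`|E| ∫_J (g - α)⁺ ≤ |J| ∫ (g - α)⁺ = |J| ∫ (f - α)⁺ ≤ |J| 2ⁿ M |E| / 2`, which is the bound on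
`Ω(g, J)`. If `α` lies below the mean of `f`, apply this to `-f` and the reflected rearrangement
`u ↦ -g (1 - u)`.
-/

open Filter Topology ProbabilityTheory BoxIntegral
open scoped Function

section MeanOscillation

variable {X : Type*} [MeasurableSpace X] {μ : Measure X} {f : X → ℝ} {α : ℝ}

/-- The mean oscillation of `f` with respect to `μ`, that is `Ω(f, Q)` when `μ` is Lebesgue measure
restricted to `Q`. It subsumes both `oscOn` and `oscI`. -/
def meanOsc (f : X → ℝ) (μ : Measure X) : ℝ := ⨍ x, |f x - ⨍ y, f y ∂μ| ∂μ

lemma oscOn_eq_meanOsc {n : ℕ} (f : (Fin n → ℝ) → ℝ) (Q : Set (Fin n → ℝ)) :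
    oscOn f Q = meanOsc f (volume.restrict Q) := by
  simp only [oscOn, avgOn, meanOsc, setAverage_eq, smul_eq_mul, measureReal_def]

lemma oscI_eq_meanOsc (g : ℝ → ℝ) (J : Set ℝ) : oscI g J = meanOsc g (volume.restrict J) := by
  simp only [oscI, avgI, meanOsc, setAverage_eq, smul_eq_mul, measureReal_def]

lemma meanOsc_nonneg : 0 ≤ meanOsc f μ :=
  integral_nonneg fun _ => abs_nonneg _

lemma meanOsc_neg : meanOsc (fun x => -f x) μ = meanOsc f μ := by
  simp only [meanOsc, average_neg, neg_sub_neg, abs_sub_comm]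

lemma integral_abs_eq_two_mul_integral_max_zero (hf : Integrable f μ) (hf0 : ∫ x, f x ∂μ = 0) :
    ∫ x, |f x| ∂μ = 2 * ∫ x, max (f x) 0 ∂μ := by
  have abs_eq (x : X) : |f x| = 2 * max (f x) 0 - f x := by grind
  simp_rw [abs_eq]
  rw [integral_sub (hf.pos_part.const_mul 2) hf, integral_const_mul, hf0, sub_zero]

variable [IsFiniteMeasure μ]

lemma measureReal_mul_meanOsc (hf : Integrable f μ) :
    μ.real univ * meanOsc f μ = 2 * ∫ x, max (f x - ⨍ y, f y ∂μ) 0 ∂μ := by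
  rw [meanOsc, ← smul_eq_mul, measure_smul_average]
  exact integral_abs_eq_two_mul_integral_max_zero (hf.sub (integrable_const _))
    (integral_sub_average μ f)

lemma integral_max_sub_le_of_average_le (hf : Integrable f μ) (hα : ⨍ x, f x ∂μ ≤ α) :
    ∫ x, max (f x - α) 0 ∂μ ≤ μ.real univ * meanOsc f μ / 2 := by
  rw [measureReal_mul_meanOsc hf, mul_div_cancel_left₀ _ two_ne_zero]
  exact integral_mono (hf.sub (integrable_const _)).pos_part
    (hf.sub (integrable_const _)).pos_part fun x => max_le_max_right 0 (sub_le_sub_left hα _)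

end MeanOscillation

section Antitone

variable {g : ℝ → ℝ} {a b c e s t : ℝ}

lemma exists_forall_le_forall_ge_of_antitoneOn (hg : AntitoneOn g (Ioo a b)) (hab : a ≤ b) (α : ℝ) :
    ∃ c ∈ Icc a b, (∀ u ∈ Ioo a c, α ≤ g u) ∧ ∀ u ∈ Ioo c b, g u ≤ α := by
  set s : Set ℝ := insert a {u ∈ Ioo a b | α ≤ g u}
  have s_le : ∀ u ∈ s, u ≤ b := by
    rintro u (rfl | hu)
    exacts [hab, hu.1.2.le]
  have bddAbove_s : BddAbove s := ⟨b, s_le⟩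
  have a_le : a ≤ sSup s := le_csSup bddAbove_s (mem_insert ..)
  refine ⟨sSup s, ⟨a_le, csSup_le (insert_nonempty ..) s_le⟩, fun u hu => ?_, fun u hu => ?_⟩
  · obtain ⟨v, rfl | hv, huv⟩ := exists_lt_of_lt_csSup (insert_nonempty ..) hu.2
    · exact absurd huv hu.1.not_gt
    · exact hv.2.trans (hg ⟨hu.1, huv.trans hv.1.2⟩ hv.1 huv.le)
  · by_contra! hαu
    have hus : u ∈ s := mem_insert_of_mem _ ⟨⟨a_le.trans_lt hu.1, hu.2⟩, hαu.le⟩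
    exact hu.1.not_ge (le_csSup bddAbove_s hus)

lemma intervalIntegral_max_zero_eq_of_sign_change (hac : a ≤ c) (hcb : c ≤ b)
    (hg : IntervalIntegrable g volume a b)
    (hg_left : ∀ u ∈ Ioo a c, 0 ≤ g u) (hg_right : ∀ u ∈ Ioo c b, g u ≤ 0) :
    ∫ u in a..b, max (g u) 0 = ∫ u in a..c, g u := by
  have hc : c ∈ uIcc a b := uIcc_of_le (hac.trans hcb) ▸ ⟨hac, hcb⟩
  have hgmax : IntervalIntegrable (fun u => max (g u) 0) volume a b :=
    ⟨hg.1.pos_part, hg.2.pos_part⟩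
  have left : ∫ u in a..c, max (g u) 0 = ∫ u in a..c, g u :=
    intervalIntegral.integral_congr_Ioo_of_le hac fun u hu => max_eq_left (hg_left u hu)
  have right : ∫ u in c..b, max (g u) 0 = 0 := by
    rw [intervalIntegral.integral_congr_Ioo_of_le hcb fun u hu => max_eq_right (hg_right u hu),
      intervalIntegral.integral_zero]
  rw [← intervalIntegral.integral_add_adjacent_intervals
    (hgmax.mono_set (uIcc_subset_uIcc_left hc)) (hgmax.mono_set (uIcc_subset_uIcc_right hc)),
    left, right, add_zero]

lemma length_mul_intervalIntegral_le_of_antitoneOn (hg : AntitoneOn g (Ioo a c))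
    (hgi : IntervalIntegrable g volume a c) (hab : a ≤ b) (hbc : b ≤ c) :
    (b - a) * ∫ u in b..c, g u ≤ (c - b) * ∫ u in a..b, g u := by
  rcases hab.eq_or_lt with rfl | hab'
  · simp
  rcases hbc.eq_or_lt with rfl | hbc'
  · simp
  have hb : b ∈ Ioo a c := ⟨hab', hbc'⟩
  have hb' : b ∈ uIcc a c := uIcc_of_le (hab.trans hbc) ▸ ⟨hab, hbc⟩
  have right_le : ∫ u in b..c, g u ≤ ∫ _ in b..c, g b :=
    intervalIntegral.integral_mono_on_of_le_Ioo hbc (hgi.mono_set (uIcc_subset_uIcc_right hb'))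
      intervalIntegrable_const fun u hu => hg hb ⟨hab'.trans hu.1, hu.2⟩ hu.1.le
  have le_left : ∫ _ in a..b, g b ≤ ∫ u in a..b, g u :=
    intervalIntegral.integral_mono_on_of_le_Ioo hab intervalIntegrable_const
      (hgi.mono_set (uIcc_subset_uIcc_left hb')) fun u hu =>
        hg ⟨hu.1, hu.2.trans hbc'⟩ hb hu.2.le
  rw [intervalIntegral.integral_const, smul_eq_mul] at right_le le_left
  calc (b - a) * ∫ u in b..c, g u
      ≤ (b - a) * ((c - b) * g b) := mul_le_mul_of_nonneg_left right_le (sub_nonneg.2 hab)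
    _ = (c - b) * ((b - a) * g b) := by ring
    _ ≤ (c - b) * ∫ u in a..b, g u := mul_le_mul_of_nonneg_left le_left (sub_nonneg.2 hbc)

lemma intervalIntegrable_of_mem_Icc (hg : IntervalIntegrable g volume s t) (ha : a ∈ Icc s t)
    (hb : b ∈ Icc s t) : IntervalIntegrable g volume a b := by
  refine hg.mono_set (uIcc_subset_uIcc ?_ ?_) <;> rwa [uIcc_of_le (ha.1.trans ha.2)]

-- With `A` and `B` the integrals of `g` over `[s, a]` and `[a, c]`, comparing averages of `g` over
-- adjacent intervals gives `(a - s) B ≤ (c - a) A` and `(e - b) B ≤ (b - c) A`; add `(b - a) B`.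
lemma mul_intervalIntegral_le_of_antitoneOn (hg : AntitoneOn g (Ioo s t))
    (hgi : IntervalIntegrable g volume s t) (hsa : s ≤ a) (hab : a < b) (hbt : b ≤ t) (het : e ≤ t)
    (hc : c ∈ Icc a b) (hg_ab : ∫ u in a..b, g u = 0) (hg_ac : 0 ≤ ∫ u in a..c, g u)
    (hg_se : 0 ≤ ∫ u in s..e, g u) :
    (e - s) * ∫ u in a..c, g u ≤ (b - a) * ∫ u in s..c, g u := by
  obtain ⟨hac, hcb⟩ := hc
  have integrable {x y : ℝ} (hx : x ∈ Icc s t) (hy : y ∈ Icc s t) :=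
    intervalIntegrable_of_mem_Icc hgi hx hy
  have hs : s ∈ Icc s t := ⟨le_rfl, by linarith⟩
  have ha : a ∈ Icc s t := ⟨hsa, by linarith⟩
  have hb : b ∈ Icc s t := ⟨by linarith, hbt⟩
  have hc : c ∈ Icc s t := ⟨by linarith, by linarith⟩
  have split_ab := intervalIntegral.integral_add_adjacent_intervals (integrable ha hc)
    (integrable hc hb)
  have split_sc := intervalIntegral.integral_add_adjacent_intervals (integrable hs ha)
    (integrable ha hc)
  have integral_sa_nonneg : 0 ≤ ∫ u in s..a, g u := by
    have := length_mul_intervalIntegral_le_of_antitoneOn (hg.mono (Ioo_subset_Ioo_right hbt))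
      (integrable hs hb) hsa hab.le
    rw [hg_ab, mul_zero] at this
    exact nonneg_of_mul_nonneg_right this (sub_pos.2 hab)
  have left : (a - s) * ∫ u in a..c, g u ≤ (c - a) * ∫ u in s..a, g u :=
    length_mul_intervalIntegral_le_of_antitoneOn (hg.mono (Ioo_subset_Ioo_right hc.2))
      (integrable hs hc) hsa hac
  have right : (e - b) * ∫ u in a..c, g u ≤ (b - c) * ∫ u in s..a, g u := by
    rcases le_total e b with heb | hbe
    · exact (mul_nonpos_of_nonpos_of_nonneg (sub_nonpos.2 heb) hg_ac).trans
        (mul_nonneg (sub_nonneg.2 hcb) integral_sa_nonneg)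
    have he : e ∈ Icc s t := ⟨hb.1.trans hbe, het⟩
    have compare : (b - c) * ∫ u in b..e, g u ≤ (e - b) * ∫ u in c..b, g u :=
      length_mul_intervalIntegral_le_of_antitoneOn (hg.mono (Ioo_subset_Ioo hc.1 het))
        (integrable hc he) hcb hbe
    rw [← intervalIntegral.integral_add_adjacent_intervals (integrable hs hb) (integrable hb he),
      ← intervalIntegral.integral_add_adjacent_intervals (integrable hs ha) (integrable ha hb),
      hg_ab, add_zero] at hg_se
    rw [show ∫ u in c..b, g u = -∫ u in a..c, g u by linarith] at compare
    linarith [mul_nonneg (sub_nonneg.2 hcb) hg_se]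
  rw [← split_sc]
  linarith

lemma mul_intervalIntegral_max_zero_le_of_antitoneOn (hg : AntitoneOn g (Ioo s t))
    (hgi : IntervalIntegrable g volume s t) (hsa : s ≤ a) (hab : a < b) (hbt : b ≤ t) (het : e ≤ t)
    (hg_ab : ∫ u in a..b, g u = 0) (hg_se : 0 ≤ ∫ u in s..e, g u) :
    (e - s) * ∫ u in a..b, max (g u) 0 ≤ (b - a) * ∫ u in s..t, max (g u) 0 := by
  obtain ⟨c, hc, g_nonneg, g_nonpos⟩ := exists_forall_le_forall_ge_of_antitoneOn
    (hg.mono (Ioo_subset_Ioo hsa hbt)) hab.le 0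
  have hsc : s ≤ c := hsa.trans hc.1
  have hct : c ≤ t := hc.2.trans hbt
  have hst : s ≤ t := hsc.trans hct
  have integral_ac : ∫ u in a..b, max (g u) 0 = ∫ u in a..c, g u :=
    intervalIntegral_max_zero_eq_of_sign_change hc.1 hc.2 (intervalIntegrable_of_mem_Icc hgi
      ⟨hsa, hab.le.trans hbt⟩ ⟨hsa.trans hab.le, hbt⟩) g_nonneg g_nonpos
  have integral_ac_nonneg : 0 ≤ ∫ u in a..c, g u :=
    integral_ac ▸ intervalIntegral.integral_nonneg hab.le fun _ _ => le_max_right _ _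
  have hgmax : IntervalIntegrable (fun u => max (g u) 0) volume s t :=
    ⟨hgi.1.pos_part, hgi.2.pos_part⟩
  calc (e - s) * ∫ u in a..b, max (g u) 0
      = (e - s) * ∫ u in a..c, g u := by rw [integral_ac]
    _ ≤ (b - a) * ∫ u in s..c, g u :=
      mul_intervalIntegral_le_of_antitoneOn hg hgi hsa hab hbt het hc hg_ab integral_ac_nonneg hg_se
    _ ≤ (b - a) * ∫ u in s..c, max (g u) 0 := by
      gcongr
      exact intervalIntegral.integral_mono hsc
        (intervalIntegrable_of_mem_Icc hgi ⟨le_rfl, hst⟩ ⟨hsc, hct⟩)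
        (intervalIntegrable_of_mem_Icc hgmax ⟨le_rfl, hst⟩ ⟨hsc, hct⟩) fun _ => le_max_left _ _
    _ ≤ (b - a) * ∫ u in s..t, max (g u) 0 := by
      gcongr
      exact intervalIntegral.integral_mono_interval le_rfl hsc hct
        (Eventually.of_forall fun _ => le_max_right _ _) hgmax

end Antitone

section Reflection

variable {X Y : Type*} [MeasurableSpace X] [MeasurableSpace Y] {μ : Measure X} {ν : Measure Y}
  {φ : X → Y}

lemma average_comp_of_measurePreserving (hφ : MeasurePreserving φ μ ν)
    (hφ_emb : MeasurableEmbedding φ) (f : Y → ℝ) : ⨍ x, f (φ x) ∂μ = ⨍ y, f y ∂ν := by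
  rw [average_eq, average_eq, hφ.integral_comp hφ_emb,
    ← hφ.measureReal_preimage nullMeasurableSet_univ, preimage_univ]

lemma meanOsc_comp_of_measurePreserving (hφ : MeasurePreserving φ μ ν)
    (hφ_emb : MeasurableEmbedding φ) (f : Y → ℝ) :
    meanOsc (fun x => f (φ x)) μ = meanOsc f ν := by
  rw [meanOsc, average_comp_of_measurePreserving hφ hφ_emb f,
    average_comp_of_measurePreserving hφ hφ_emb fun y => |f y - ⨍ z, f z ∂ν|, meanOsc]

lemma measurePreserving_sub_left_restrict_Ioo (c a b : ℝ) :
    MeasurePreserving (fun u : ℝ => c - u) (volume.restrict (Ioo (c - b) (c - a)))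
      (volume.restrict (Ioo a b)) := by
  rw [← preimage_const_sub_Ioo]
  exact (Measure.measurePreserving_sub_left volume c).restrict_preimage measurableSet_Ioo

lemma setAverage_neg_comp_sub_left (g : ℝ → ℝ) (c a b : ℝ) :
    ⨍ u in Ioc (c - b) (c - a), -g (c - u) = -⨍ u in Ioc a b, g u := by
  rw [average_neg, ← restrict_Ioo_eq_restrict_Ioc, ← restrict_Ioo_eq_restrict_Ioc,
    average_comp_of_measurePreserving (measurePreserving_sub_left_restrict_Ioo c a b)
      (Homeomorph.subLeft c).measurableEmbedding g]

lemma meanOsc_neg_comp_sub_left (g : ℝ → ℝ) (c a b : ℝ) :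
    meanOsc (fun u => -g (c - u)) (volume.restrict (Ioc (c - b) (c - a))) =
      meanOsc g (volume.restrict (Ioc a b)) := by
  rw [meanOsc_neg, ← restrict_Ioo_eq_restrict_Ioc, ← restrict_Ioo_eq_restrict_Ioc]
  exact meanOsc_comp_of_measurePreserving (measurePreserving_sub_left_restrict_Ioo c a b)
    (Homeomorph.subLeft c).measurableEmbedding g

end Reflection

/-- `g`, restricted to `(0, μ(X))`, is a nonincreasing rearrangement of the function `f` on the
measure space `(X, μ)`. Unlike `f^*`, it rearranges `f` itself rather than `|f|`, so that the notion
is symmetric under `f ↦ -f`; one-sided continuity, which would only pin down the values of `g` at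
its jumps, is not part of the definition. -/
structure IsDecreasingRearrangement {X : Type*} [MeasurableSpace X] (f : X → ℝ) (g : ℝ → ℝ)
    (μ : Measure X) : Prop where
  antitoneOn : AntitoneOn g (Ioo 0 (μ.real univ))
  identDistrib : IdentDistrib f g μ (volume.restrict (Ioo 0 (μ.real univ)))

namespace IsDecreasingRearrangement

variable {X : Type*} [MeasurableSpace X] {μ : Measure X} {f : X → ℝ} {g : ℝ → ℝ}

lemma intervalIntegrable (h : IsDecreasingRearrangement f g μ) (hf : Integrable f μ) :
    IntervalIntegrable g volume 0 (μ.real univ) :=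
  (intervalIntegrable_iff_integrableOn_Ioo_of_le measureReal_nonneg).2
    (h.identDistrib.integrable_iff.1 hf)

lemma integral_comp_eq (h : IsDecreasingRearrangement f g μ) {φ : ℝ → ℝ} (hφ : Measurable φ) :
    ∫ x, φ (f x) ∂μ = ∫ u in 0..μ.real univ, φ (g u) := by
  rw [intervalIntegral.integral_of_le measureReal_nonneg, integral_Ioc_eq_integral_Ioo]
  exact (h.identDistrib.comp hφ).integral_eq

lemma sub_const (h : IsDecreasingRearrangement f g μ) (α : ℝ) :
    IsDecreasingRearrangement (fun x => f x - α) (fun u => g u - α) μ where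
  antitoneOn _ hu _ hv huv := sub_le_sub_right (h.antitoneOn hu hv huv) α
  identDistrib := h.identDistrib.comp (measurable_id.sub_const α)

lemma neg_comp_sub_left (h : IsDecreasingRearrangement f g μ) :
    IsDecreasingRearrangement (fun x => -f x) (fun u => -g (μ.real univ - u)) μ where
  antitoneOn u hu v hv huv := neg_le_neg <| h.antitoneOn
    ⟨sub_pos.2 hv.2, sub_lt_self _ hv.1⟩ ⟨sub_pos.2 hu.2, sub_lt_self _ hu.1⟩
    (sub_le_sub_left huv _)
  identDistrib := by
    have hφ := measurePreserving_sub_left_restrict_Ioo (μ.real univ) 0 (μ.real univ)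
    rw [sub_self, sub_zero] at hφ
    have hφ_id : IdentDistrib id (fun u => μ.real univ - u)
        (volume.restrict (Ioo 0 (μ.real univ))) (volume.restrict (Ioo 0 (μ.real univ))) :=
      ⟨aemeasurable_id, hφ.aemeasurable, Measure.map_id.trans hφ.map_eq.symm⟩
    have hg : AEMeasurable g (Measure.map id (volume.restrict (Ioo 0 (μ.real univ)))) :=
      Measure.map_id.symm ▸ h.identDistrib.aemeasurable_snd
    exact (h.identDistrib.trans (hφ_id.comp_of_aemeasurable hg)).comp measurable_neg

variable [IsFiniteMeasure μ]

lemma setIntegral_sub_le (h : IsDecreasingRearrangement f g μ) (hf : Integrable f μ) (E : Set X)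
    {c e : ℝ} (he : e ∈ Icc 0 (μ.real univ)) (hg_left : ∀ u ∈ Ioo 0 e, c ≤ g u)
    (hg_right : ∀ u ∈ Ioo e (μ.real univ), g u ≤ c) :
    ∫ x in E, (f x - c) ∂μ ≤ ∫ u in 0..e, (g u - c) := by
  have hfc : Integrable (fun x => f x - c) μ := hf.sub (integrable_const c)
  calc ∫ x in E, (f x - c) ∂μ
      ≤ ∫ x in E, max (f x - c) 0 ∂μ :=
        integral_mono hfc.integrableOn hfc.pos_part.integrableOn fun x => le_max_left _ _
    _ ≤ ∫ x, max (f x - c) 0 ∂μ :=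
        setIntegral_le_integral hfc.pos_part (Eventually.of_forall fun _ => le_max_right _ _)
    _ = ∫ u in 0..μ.real univ, max (g u - c) 0 :=
        h.integral_comp_eq (φ := fun y => max (y - c) 0) (by fun_prop)
    _ = ∫ u in 0..e, (g u - c) :=
        intervalIntegral_max_zero_eq_of_sign_change he.1 he.2
          ((h.intervalIntegrable hf).sub intervalIntegrable_const)
          (fun u hu => sub_nonneg.2 (hg_left u hu)) (fun u hu => sub_nonpos.2 (hg_right u hu))

lemma setIntegral_le (h : IsDecreasingRearrangement f g μ) (hf : Integrable f μ) {E : Set X}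
    (hE : MeasurableSet E) : ∫ x in E, f x ∂μ ≤ ∫ u in 0..μ.real E, g u := by
  rcases (measureReal_nonneg : 0 ≤ μ.real E).eq_or_lt with hE0 | hE0
  · rw [← hE0, intervalIntegral.integral_same, Measure.restrict_eq_zero.2, integral_zero_measure]
    exact (measureReal_eq_zero_iff).1 hE0.symm
  rcases (measureReal_mono (subset_univ E) : μ.real E ≤ μ.real univ).eq_or_lt with hET | hET
  · have hE_univ : E =ᵐ[μ] univ := by
      rwa [ae_eq_univ, ← measureReal_eq_zero_iff, measureReal_compl hE, sub_eq_zero, eq_comm]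
    rw [hET, setIntegral_congr_set hE_univ, setIntegral_univ]
    exact (h.integral_comp_eq measurable_id).le
  have hE_mem : μ.real E ∈ Ioo 0 (μ.real univ) := ⟨hE0, hET⟩
  have key := h.setIntegral_sub_le hf E (c := g (μ.real E)) ⟨hE0.le, hET.le⟩
    (fun u hu => h.antitoneOn ⟨hu.1, hu.2.trans hET⟩ hE_mem hu.2.le)
    (fun u hu => h.antitoneOn hE_mem ⟨hE0.trans hu.1, hu.2⟩ hu.1.le)
  rw [integral_sub hf.integrableOn (integrable_const _), setIntegral_const,
    intervalIntegral.integral_sub (intervalIntegrable_of_mem_Icc (h.intervalIntegrable hf)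
      ⟨le_rfl, measureReal_nonneg⟩ ⟨hE0.le, hET.le⟩) intervalIntegrable_const,
    intervalIntegral.integral_const, sub_zero] at key
  exact (sub_le_sub_iff_right _).1 key

lemma intervalIntegral_max_zero_le (h : IsDecreasingRearrangement f g μ) (hf : Integrable f μ)
    {a b C : ℝ} (ha : 0 ≤ a) (hab : a < b) (hb : b ≤ μ.real univ) (hg_ab : ∫ u in a..b, g u = 0)
    (hC : 0 ≤ C) {E : Set X} (hE : MeasurableSet E) (hfE : 0 ≤ ∫ x in E, f x ∂μ)
    (hf_max : ∫ x, max (f x) 0 ∂μ ≤ C * μ.real E) :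
    ∫ u in a..b, max (g u) 0 ≤ C * (b - a) := by
  have hgi := h.intervalIntegrable hf
  rw [h.integral_comp_eq (φ := fun y => max y 0) (by fun_prop)] at hf_max
  rcases (measureReal_nonneg : 0 ≤ μ.real E).eq_or_lt with hE0 | hE0
  · calc ∫ u in a..b, max (g u) 0
        ≤ ∫ u in 0..μ.real univ, max (g u) 0 :=
          intervalIntegral.integral_mono_interval ha hab.le hb
            (Eventually.of_forall fun _ => le_max_right _ _) ⟨hgi.1.pos_part, hgi.2.pos_part⟩
      _ ≤ 0 := by rwa [← hE0, mul_zero] at hf_max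
      _ ≤ C * (b - a) := mul_nonneg hC (sub_pos.2 hab).le
  · have compare := mul_intervalIntegral_max_zero_le_of_antitoneOn h.antitoneOn hgi ha hab hb
      (measureReal_mono (subset_univ E)) hg_ab (hfE.trans (h.setIntegral_le hf hE))
    rw [sub_zero] at compare
    refine le_of_mul_le_mul_left (compare.trans ?_) hE0
    calc (b - a) * ∫ u in 0..μ.real univ, max (g u) 0
        ≤ (b - a) * (C * μ.real E) := by gcongr
      _ = μ.real E * (C * (b - a)) := by ring

lemma meanOsc_restrict_Ioc_le (h : IsDecreasingRearrangement f g μ) (hf : Integrable f μ)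
    {a b C : ℝ} (ha : 0 ≤ a) (hab : a < b) (hb : b ≤ μ.real univ) (hC : 0 ≤ C) {E : Set X}
    (hE : MeasurableSet E) (hfE : 0 ≤ ∫ x in E, (f x - ⨍ u in Ioc a b, g u) ∂μ)
    (hf_max : ∫ x, max (f x - ⨍ u in Ioc a b, g u) 0 ∂μ ≤ C * μ.real E) :
    meanOsc g (volume.restrict (Ioc a b)) ≤ 2 * C := by
  have integral_ab : ∫ u in a..b, (g u - ⨍ v in Ioc a b, g v) = 0 := by
    rw [intervalIntegral.integral_of_le hab.le]
    exact integral_sub_average _ g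
  have osc_eq := measureReal_mul_meanOsc (intervalIntegrable_of_mem_Icc
    (h.intervalIntegrable hf) ⟨ha, hab.le.trans hb⟩ ⟨ha.trans hab.le, hb⟩).1
  rw [measureReal_restrict_apply_univ, Real.volume_real_Ioc_of_le hab.le,
    ← intervalIntegral.integral_of_le hab.le] at osc_eq
  refine le_of_mul_le_mul_left ?_ (sub_pos.2 hab)
  calc (b - a) * meanOsc g (volume.restrict (Ioc a b)) = _ := osc_eq
    _ ≤ 2 * (C * (b - a)) := by
      gcongr
      exact (h.sub_const _).intervalIntegral_max_zero_le (hf.sub (integrable_const _)) ha hab hb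
        integral_ab hC hE hfE hf_max
    _ = (b - a) * (2 * C) := by ring

end IsDecreasingRearrangement

section DyadicCell

variable {ι : Type*} {j k : ℕ} {x y : ι → ℝ}

/-- The half-open dyadic cube of side length `2⁻ᵏ` containing `x`, a product of intervals
`(ν i / 2 ^ k, (ν i + 1) / 2 ^ k]` with integers `ν i`. Half-open cubes of a given generation
partition `ℝⁿ`, whereas the closed cubes of the statement only do so up to null sets. -/
def dyadicCell (k : ℕ) (x : ι → ℝ) : Set (ι → ℝ) :=
  unitPartition.box (2 ^ k) (unitPartition.index (2 ^ k) x)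

lemma mem_dyadicCell_self (k : ℕ) (x : ι → ℝ) : x ∈ dyadicCell k x :=
  unitPartition.mem_box_iff_index.2 rfl

lemma mem_dyadicCell_iff : y ∈ dyadicCell k x ↔ ∀ i, ⌈2 ^ k * y i⌉ = ⌈2 ^ k * x i⌉ := by
  rw [dyadicCell, Box.mem_coe, unitPartition.mem_box_iff_index, funext_iff]
  simp [unitPartition.index_apply]

lemma dyadicCell_eq_of_mem (hy : y ∈ dyadicCell k x) : dyadicCell k y = dyadicCell k x := by
  rw [dyadicCell, unitPartition.mem_box_iff_index.1 hy, dyadicCell]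

lemma dyadicCell_succ_subset (k : ℕ) (x : ι → ℝ) : dyadicCell (k + 1) x ⊆ dyadicCell k x := by
  intro y hy
  rw [mem_dyadicCell_iff] at hy ⊢
  intro i
  have ceil_le_iff (z : ℝ) (m : ℤ) : ⌈2 ^ k * z⌉ ≤ m ↔ ⌈2 ^ (k + 1) * z⌉ ≤ 2 * m := by
    rw [Int.ceil_le, Int.ceil_le, pow_succ']
    push_cast
    rw [mul_assoc, mul_le_mul_iff_right₀ two_pos]
  exact eq_of_forall_ge_iff fun m => by rw [ceil_le_iff, hy i, ← ceil_le_iff]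

lemma antitone_dyadicCell (x : ι → ℝ) : Antitone fun k => dyadicCell k x :=
  antitone_nat_of_succ_le fun k => dyadicCell_succ_subset k x

lemma dyadicCell_eq_of_mem_of_le (hjk : j ≤ k) (hy : y ∈ dyadicCell k x) :
    dyadicCell j y = dyadicCell j x :=
  dyadicCell_eq_of_mem (antitone_dyadicCell x hjk hy)

lemma dyadicCell_subset_of_mem (hjk : j ≤ k) (hy : y ∈ dyadicCell j x) :
    dyadicCell k y ⊆ dyadicCell j x :=
  dyadicCell_eq_of_mem hy ▸ antitone_dyadicCell y hjk

lemma countable_range_dyadicCell [Finite ι] :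
    (range fun p : ℕ × (ι → ℝ) => dyadicCell p.1 p.2).Countable := by
  refine (countable_range fun p : ℕ × (ι → ℤ) =>
    (unitPartition.box (2 ^ p.1) p.2 : Set (ι → ℝ))).mono ?_
  rintro _ ⟨⟨k, x⟩, rfl⟩
  exact ⟨(k, unitPartition.index (2 ^ k) x), rfl⟩

lemma measurableSet_dyadicCell [Finite ι] (k : ℕ) (x : ι → ℝ) : MeasurableSet (dyadicCell k x) :=
  Box.measurableSet_coe _

variable [Fintype ι]

lemma volume_real_dyadicCell (k : ℕ) (x : ι → ℝ) :
    volume.real (dyadicCell k x) = ((2 ^ k) ^ Fintype.card ι)⁻¹ := by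
  simp [dyadicCell, measureReal_def, unitPartition.volume_box]

lemma volume_real_dyadicCell_eq_mul (k : ℕ) (x y : ι → ℝ) :
    volume.real (dyadicCell k x) = 2 ^ Fintype.card ι * volume.real (dyadicCell (k + 1) y) := by
  rw [volume_real_dyadicCell, volume_real_dyadicCell, pow_succ, mul_pow]
  field_simp

lemma volume_dyadicCell_ne_top (k : ℕ) (x : ι → ℝ) : volume (dyadicCell k x) ≠ ⊤ := by
  simp [dyadicCell, unitPartition.volume_box]

lemma dyadicCell_ae_eq_Icc (k : ℕ) (x : ι → ℝ) :
    dyadicCell k x =ᵐ[volume]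
      Icc (fun i => (⌈2 ^ k * x i⌉ - 1 : ℝ) / 2 ^ k) (fun i => (⌈2 ^ k * x i⌉ : ℝ) / 2 ^ k) := by
  simpa [dyadicCell, Box.Icc_def, unitPartition.index_apply] using
    Box.coe_ae_eq_Icc (unitPartition.box (2 ^ k) (unitPartition.index (2 ^ k) x))

lemma exists_closedBall_ae_eq_dyadicCell (k : ℕ) (x : ι → ℝ) :
    ∃ c, x ∈ Metric.closedBall c (1 * ((1 / 2) ^ k / 2)) ∧
      dyadicCell k x =ᵐ[volume] Metric.closedBall c ((1 / 2) ^ k / 2) := by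
  set ν : ι → ℝ := fun i => ⌈2 ^ k * x i⌉
  have Icc_eq : Icc (fun i => (ν i - 1) / 2 ^ k) (fun i => ν i / 2 ^ k) =
      Metric.closedBall (fun i => (ν i - 1 / 2) / 2 ^ k) ((1 / 2) ^ k / 2) := by
    rw [closedBall_pi _ (by positivity), ← pi_univ_Icc]
    congr! 2 with i
    rw [Real.Icc_eq_closedBall]
    congr 1
    · ring
    · rw [one_div, inv_pow]; ring
  refine ⟨_, ?_, Icc_eq ▸ dyadicCell_ae_eq_Icc k x⟩
  rw [one_mul, ← Icc_eq]
  refine ⟨fun i => ?_, fun i => ?_⟩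
  · rw [div_le_iff₀' (by positivity), sub_le_iff_le_add]
    exact (Int.ceil_lt_add_one _).le
  · rw [le_div_iff₀' (by positivity)]
    exact Int.le_ceil _

lemma ae_tendsto_average_dyadicCell {f : (ι → ℝ) → ℝ} (hf : LocallyIntegrable f) :
    ∀ᵐ x, Tendsto (fun k => ⨍ y in dyadicCell k x, f y) atTop (𝓝 (f x)) := by
  have radius_tendsto : Tendsto (fun k : ℕ => (1 / 2 : ℝ) ^ k / 2) atTop (𝓝[>] 0) := by
    refine tendsto_nhdsWithin_iff.2 ⟨?_, Eventually.of_forall fun k => mem_Ioi.2 (by positivity)⟩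
    simpa using (tendsto_pow_atTop_nhds_zero_of_lt_one (r := (1 / 2 : ℝ)) (by norm_num)
      (by norm_num)).div_const 2
  filter_upwards [IsUnifLocDoublingMeasure.ae_tendsto_average volume hf 1] with x hx
  choose c hxc hc using fun k => exists_closedBall_ae_eq_dyadicCell k x
  simp_rw [setAverage_congr (hc _)]
  exact hx c _ radius_tendsto (Eventually.of_forall hxc)

end DyadicCell

lemma setIntegral_max_zero_le_of_pairwise_disjoint {X I : Type*} [MeasurableSpace X] [Countable I]
    {μ : Measure X} {f : X → ℝ} {Q : Set X} {P E : I → Set X} {C : ℝ} (hQ : MeasurableSet Q)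
    (hμQ : μ Q ≠ ⊤) (hf : IntegrableOn f Q μ) (hP : ∀ i, MeasurableSet (P i))
    (hP_disj : Pairwise (Disjoint on P)) (hPQ : ∀ i, P i ⊆ Q) (hE : ∀ i, MeasurableSet (E i))
    (hEP : ∀ i, E i ⊆ P i) (hfP : ∀ i, ∫ x in P i, max (f x) 0 ∂μ ≤ C * μ.real (E i))
    (hfQ : ∀ᵐ x ∂μ, x ∈ Q \ ⋃ i, P i → f x ≤ 0) :
    ∫ x in Q, max (f x) 0 ∂μ ≤ C * μ.real (⋃ i, E i) := by
  have hPQ' : ⋃ i, P i ⊆ Q := iUnion_subset hPQ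
  have hE_disj : Pairwise (Disjoint on E) := fun i j hij => (hP_disj hij).mono (hEP i) (hEP j)
  have hμE : μ (⋃ i, E i) ≠ ⊤ := measure_ne_top_of_subset ((iUnion_mono hEP).trans hPQ') hμQ
  have sum_max : HasSum (fun i => ∫ x in P i, max (f x) 0 ∂μ) (∫ x in ⋃ i, P i, max (f x) 0 ∂μ) :=
    hasSum_integral_iUnion hP hP_disj (IntegrableOn.mono_set hf.pos_part hPQ')
  have sum_measure : HasSum (fun i => μ.real (E i)) (μ.real (⋃ i, E i)) := by
    simpa using hasSum_integral_iUnion hE hE_disj (integrableOn_const (C := (1 : ℝ)) hμE)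
  calc ∫ x in Q, max (f x) 0 ∂μ
      = ∫ x in ⋃ i, P i, max (f x) 0 ∂μ :=
        setIntegral_eq_of_subset_of_ae_sdiff_eq_zero hQ.nullMeasurableSet hPQ'
          (hfQ.mono fun x hx hxQ => max_eq_right (hx hxQ))
    _ ≤ C * μ.real (⋃ i, E i) := hasSum_le hfP sum_max (sum_measure.mul_left C)

lemma setIntegral_sub_nonneg_of_lt_average {X : Type*} [MeasurableSpace X] {μ : Measure X}
    {f : X → ℝ} {s : Set X} {α : ℝ} (hμ : μ s ≠ ⊤) (hf : IntegrableOn f s μ)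
    (h : α < ⨍ x in s, f x ∂μ) : 0 ≤ ∫ x in s, (f x - α) ∂μ := by
  rw [integral_sub hf (integrableOn_const hμ), setIntegral_const, ← measure_smul_setAverage f hμ,
    ← smul_sub]
  exact smul_nonneg measureReal_nonneg (sub_nonneg.2 h.le)

section StoppingCell

variable {ι : Type*} [Fintype ι] {f : (ι → ℝ) → ℝ} {α : ℝ} {k l : ℕ} {x y x₀ : ι → ℝ}

/-- The generation-`k` dyadic cell around `x` has a child over which the average of `f` exceeds `α`,
and it is the largest dyadic cell around `x` with this property. These are the stopping cells of the
Calderón–Zygmund decomposition at height `α`: the selected sets are their children of large average,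
while the averages over the stopping cells themselves are still at most `α`. -/
structure IsStoppingCell (f : (ι → ℝ) → ℝ) (α : ℝ) (k : ℕ) (x : ι → ℝ) : Prop where
  exists_child : ∃ y ∈ dyadicCell k x, α < ⨍ z in dyadicCell (k + 1) y, f z
  forall_child_le : ∀ j < k, ∀ y ∈ dyadicCell j x, ⨍ z in dyadicCell (j + 1) y, f z ≤ α

lemma exists_isStoppingCell (h : α < ⨍ z in dyadicCell (k + 1) x, f z) :
    ∃ k, IsStoppingCell f α k x := by
  classical
  have h_ex : ∃ k, ∃ y ∈ dyadicCell k x, α < ⨍ z in dyadicCell (k + 1) y, f z :=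
    ⟨k, x, mem_dyadicCell_self k x, h⟩
  refine ⟨Nat.find h_ex, Nat.find_spec h_ex, fun j hj => ?_⟩
  simpa only [not_exists, not_and, not_lt] using Nat.find_min h_ex hj

namespace IsStoppingCell

lemma of_mem (h : IsStoppingCell f α k x) (hy : y ∈ dyadicCell k x) : IsStoppingCell f α k y where
  exists_child := (dyadicCell_eq_of_mem hy).symm ▸ h.exists_child
  forall_child_le j hj := (dyadicCell_eq_of_mem_of_le hj.le hy).symm ▸ h.forall_child_le j hj

lemma generation_eq (hk : IsStoppingCell f α k x) (hl : IsStoppingCell f α l x) : k = l := by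
  obtain ⟨y, hy, hαy⟩ := hk.exists_child
  obtain ⟨z, hz, hαz⟩ := hl.exists_child
  exact le_antisymm (not_lt.1 fun hlk => hαz.not_ge (hk.forall_child_le l hlk z hz))
    (not_lt.1 fun hkl => hαy.not_ge (hl.forall_child_le k hkl y hy))

lemma disjoint_or_eq (hk : IsStoppingCell f α k x) (hl : IsStoppingCell f α l y) :
    Disjoint (dyadicCell k x) (dyadicCell l y) ∨ dyadicCell k x = dyadicCell l y := by
  refine or_iff_not_imp_left.2 fun h => ?_
  obtain ⟨z, hzx, hzy⟩ := not_disjoint_iff.1 h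
  obtain rfl := (hk.of_mem hzx).generation_eq (hl.of_mem hzy)
  rw [← dyadicCell_eq_of_mem hzx, dyadicCell_eq_of_mem hzy]

lemma average_le (h : IsStoppingCell f α k x) (hx : x ∈ dyadicCell 0 x₀)
    (hα : ⨍ z in dyadicCell 0 x₀, f z ≤ α) : ⨍ z in dyadicCell k x, f z ≤ α := by
  cases k with
  | zero => rwa [dyadicCell_eq_of_mem hx]
  | succ k => exact h.forall_child_le k k.lt_succ_self x (mem_dyadicCell_self k x)

end IsStoppingCell

lemma ae_le_of_forall_not_isStoppingCell (hf : IntegrableOn f (dyadicCell 0 x₀)) :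
    ∀ᵐ x, x ∈ dyadicCell 0 x₀ → (∀ k, ¬ IsStoppingCell f α k x) → f x ≤ α := by
  have hQ := measurableSet_dyadicCell 0 x₀
  filter_upwards [ae_tendsto_average_dyadicCell (hf.integrable_indicator hQ).locallyIntegrable]
    with x hx hxQ hx_stop
  have cell_subset {k : ℕ} : dyadicCell k x ⊆ dyadicCell 0 x₀ :=
    dyadicCell_subset_of_mem k.zero_le hxQ
  rw [indicator_of_mem hxQ] at hx
  refine le_of_tendsto (hx.comp (tendsto_add_atTop_nat 1)) (Eventually.of_forall fun k => ?_)
  rw [Function.comp_apply, setAverage_congr_fun (measurableSet_dyadicCell _ _) (g := f)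
    (Eventually.of_forall fun y hy => indicator_of_mem (cell_subset hy) f)]
  by_contra! h
  obtain ⟨l, hl⟩ := exists_isStoppingCell h
  exact hx_stop l hl

lemma IsStoppingCell.exists_subset_setIntegral_max_le (h : IsStoppingCell f α k x)
    (hf : IntegrableOn f (dyadicCell k x)) (hα : ⨍ z in dyadicCell k x, f z ≤ α) :
    ∃ E ⊆ dyadicCell k x, MeasurableSet E ∧ 0 ≤ ∫ z in E, (f z - α) ∧
      ∫ z in dyadicCell k x, max (f z - α) 0 ≤
        2 ^ Fintype.card ι * meanOsc f (volume.restrict (dyadicCell k x)) / 2 * volume.real E := by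
  obtain ⟨y, hy, hαy⟩ := h.exists_child
  have hE : dyadicCell (k + 1) y ⊆ dyadicCell k x := dyadicCell_subset_of_mem k.le_succ hy
  refine ⟨_, hE, measurableSet_dyadicCell _ _, setIntegral_sub_nonneg_of_lt_average
    (volume_dyadicCell_ne_top _ _) (hf.mono_set hE) hαy, ?_⟩
  have : IsFiniteMeasure (volume.restrict (dyadicCell k x)) :=
    isFiniteMeasure_restrict.2 (volume_dyadicCell_ne_top k x)
  refine (integral_max_sub_le_of_average_le hf hα).trans_eq ?_
  rw [measureReal_restrict_apply_univ, volume_real_dyadicCell_eq_mul k x y]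
  ring

/-- The stopping cells at height `α` inside the cell of generation `0` around `x₀`. -/
def stoppingCells (f : (ι → ℝ) → ℝ) (α : ℝ) (x₀ : ι → ℝ) : Set (Set (ι → ℝ)) :=
  {P | ∃ k, ∃ x ∈ dyadicCell 0 x₀, IsStoppingCell f α k x ∧ dyadicCell k x = P}

lemma countable_stoppingCells : Countable (stoppingCells f α x₀) := by
  refine (countable_range_dyadicCell.mono ?_).to_subtype
  rintro _ ⟨k, x, -, -, rfl⟩
  exact ⟨(k, x), rfl⟩

lemma pairwise_disjoint_stoppingCells :
    Pairwise (Disjoint on ((↑) : stoppingCells f α x₀ → Set (ι → ℝ))) := by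
  rintro ⟨_, k, x, _, hk, rfl⟩ ⟨_, l, y, _, hl, rfl⟩ hne
  exact (hk.disjoint_or_eq hl).resolve_right fun h => hne (Subtype.ext h)

theorem exists_subset_dyadicCell_setIntegral_max_le {M : ℝ} (hf : IntegrableOn f (dyadicCell 0 x₀))
    (hα : ⨍ x in dyadicCell 0 x₀, f x ≤ α)
    (hM : ∀ k, ∀ x ∈ dyadicCell 0 x₀, meanOsc f (volume.restrict (dyadicCell k x)) ≤ M) :
    ∃ E ⊆ dyadicCell 0 x₀, MeasurableSet E ∧ 0 ≤ ∫ x in E, (f x - α) ∧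
      ∫ x in dyadicCell 0 x₀, max (f x - α) 0 ≤ 2 ^ Fintype.card ι * M / 2 * volume.real E := by
  have := countable_stoppingCells (f := f) (α := α) (x₀ := x₀)
  have hP (P : stoppingCells f α x₀) : MeasurableSet P.1 ∧ P.1 ⊆ dyadicCell 0 x₀ := by
    obtain ⟨_, k, x, hx, -, rfl⟩ := P
    exact ⟨measurableSet_dyadicCell k x, dyadicCell_subset_of_mem (Nat.zero_le _) hx⟩
  have exists_E (P : stoppingCells f α x₀) : ∃ E ⊆ P.1, MeasurableSet E ∧
      0 ≤ ∫ x in E, (f x - α) ∧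
      ∫ x in P.1, max (f x - α) 0 ≤ 2 ^ Fintype.card ι * M / 2 * volume.real E := by
    obtain ⟨_, k, x, hx, hk, rfl⟩ := P
    obtain ⟨E, hE, hEm, hfE, hE_max⟩ := hk.exists_subset_setIntegral_max_le
      (hf.mono_set (dyadicCell_subset_of_mem (Nat.zero_le _) hx)) (hk.average_le hx hα)
    refine ⟨E, hE, hEm, hfE, hE_max.trans ?_⟩
    gcongr
    exact hM k x hx
  choose E hEP hE hfE hE_max using exists_E
  have hEQ : ⋃ P, E P ⊆ dyadicCell 0 x₀ := iUnion_subset fun P => (hEP P).trans (hP P).2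
  have hfα : IntegrableOn (fun x => f x - α) (dyadicCell 0 x₀) :=
    hf.sub (integrableOn_const (volume_dyadicCell_ne_top 0 x₀))
  refine ⟨⋃ P, E P, hEQ, .iUnion hE, ?_, ?_⟩
  · have hE_disj : Pairwise (Disjoint on E) :=
      fun P R hPR => (pairwise_disjoint_stoppingCells hPR).mono (hEP P) (hEP R)
    exact (hasSum_integral_iUnion hE hE_disj (hfα.mono_set hEQ)).nonneg hfE
  · refine setIntegral_max_zero_le_of_pairwise_disjoint (measurableSet_dyadicCell 0 x₀)
      (volume_dyadicCell_ne_top 0 x₀) hfα (fun P => (hP P).1)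
      pairwise_disjoint_stoppingCells (fun P => (hP P).2) hE hEP hE_max ?_
    filter_upwards [ae_le_of_forall_not_isStoppingCell (α := α) hf] with x hx hxQ
    refine sub_nonpos.2 (hx hxQ.1 fun k hk => hxQ.2 ?_)
    exact mem_iUnion.2 ⟨⟨_, k, x, hxQ.1, hk, rfl⟩, mem_dyadicCell_self k x⟩

end StoppingCell

section Rearrangement

variable {ι : Type*} [Fintype ι] {f : (ι → ℝ) → ℝ} {g : ℝ → ℝ} {x₀ : ι → ℝ} {M a b : ℝ}

lemma volume_real_restrict_dyadicCell_zero (x₀ : ι → ℝ) :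
    (volume.restrict (dyadicCell 0 x₀)).real univ = 1 := by
  simp [volume_real_dyadicCell]

lemma meanOsc_rearrangement_le_of_average_le (hf : IntegrableOn f (dyadicCell 0 x₀))
    (hM : ∀ k, ∀ x ∈ dyadicCell 0 x₀, meanOsc f (volume.restrict (dyadicCell k x)) ≤ M)
    (hg : IsDecreasingRearrangement f g (volume.restrict (dyadicCell 0 x₀)))
    (ha : 0 ≤ a) (hab : a < b) (hb : b ≤ 1)
    (h_avg : ⨍ x in dyadicCell 0 x₀, f x ≤ ⨍ u in Ioc a b, g u) :
    meanOsc g (volume.restrict (Ioc a b)) ≤ 2 ^ Fintype.card ι * M := by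
  have : IsFiniteMeasure (volume.restrict (dyadicCell 0 x₀)) :=
    isFiniteMeasure_restrict.2 (volume_dyadicCell_ne_top 0 x₀)
  have hM_nonneg : 0 ≤ M := meanOsc_nonneg.trans (hM 0 x₀ (mem_dyadicCell_self 0 x₀))
  obtain ⟨E, hEQ, hE, hfE, hE_max⟩ := exists_subset_dyadicCell_setIntegral_max_le hf h_avg hM
  have h := hg.meanOsc_restrict_Ioc_le hf ha hab
    (hb.trans_eq (volume_real_restrict_dyadicCell_zero x₀).symm)
    (C := 2 ^ Fintype.card ι * M / 2) (by positivity) hE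
    (by rwa [Measure.restrict_restrict_of_subset hEQ])
    (by rwa [measureReal_restrict_apply hE, inter_eq_left.2 hEQ])
  rwa [mul_div_cancel₀ _ two_ne_zero] at h

theorem meanOsc_rearrangement_le (hf : IntegrableOn f (dyadicCell 0 x₀))
    (hM : ∀ k, ∀ x ∈ dyadicCell 0 x₀, meanOsc f (volume.restrict (dyadicCell k x)) ≤ M)
    (hg : IsDecreasingRearrangement f g (volume.restrict (dyadicCell 0 x₀)))
    (ha : 0 ≤ a) (hab : a < b) (hb : b ≤ 1) :
    meanOsc g (volume.restrict (Ioc a b)) ≤ 2 ^ Fintype.card ι * M := by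
  rcases le_total (⨍ x in dyadicCell 0 x₀, f x) (⨍ u in Ioc a b, g u) with h_avg | h_avg
  · exact meanOsc_rearrangement_le_of_average_le hf hM hg ha hab hb h_avg
  have hg_neg := hg.neg_comp_sub_left
  rw [volume_real_restrict_dyadicCell_zero] at hg_neg
  rw [← meanOsc_neg_comp_sub_left g 1 a b]
  refine meanOsc_rearrangement_le_of_average_le (f := fun x => -f x) hf.neg
    (fun k x hx => meanOsc_neg.trans_le (hM k x hx)) hg_neg (sub_nonneg.2 hb)
    (sub_lt_sub_left hab 1) (sub_le_self 1 ha) ?_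
  rw [setAverage_neg_comp_sub_left, average_neg]
  exact neg_le_neg h_avg

end Rearrangement

section UnitCube

variable {n : ℕ} {f : (Fin n → ℝ) → ℝ} {g : ℝ → ℝ} {M a b : ℝ}

lemma restrict_Q0_eq_restrict_dyadicCell (n : ℕ) :
    volume.restrict (Q0 n) = volume.restrict (dyadicCell 0 1) := by
  refine Measure.restrict_congr_set (EventuallyEq.symm ?_)
  simpa [Q0, ← Pi.zero_def, ← Pi.one_def] using dyadicCell_ae_eq_Icc 0 (1 : Fin n → ℝ)

lemma measurableSet_Q0 (n : ℕ) : MeasurableSet (Q0 n) := measurableSet_Icc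

lemma volume_real_restrict_Q0 (n : ℕ) : (volume.restrict (Q0 n)).real univ = 1 := by
  rw [restrict_Q0_eq_restrict_dyadicCell, volume_real_restrict_dyadicCell_zero]

lemma exists_isDyadic_ae_eq_dyadicCell (k : ℕ) {x : Fin n → ℝ} (hx : x ∈ dyadicCell 0 1) :
    ∃ Q, IsDyadic n Q ∧ dyadicCell k x =ᵐ[volume] Q := by
  have hx_mem (i : Fin n) : 0 < x i ∧ x i ≤ 1 := by
    simpa [Int.ceil_eq_iff] using mem_dyadicCell_iff.1 hx i
  have ceil_pos (i : Fin n) : 0 < ⌈2 ^ k * x i⌉ :=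
    Int.ceil_pos.2 (mul_pos (by positivity) (hx_mem i).1)
  have ceil_le (i : Fin n) : ⌈2 ^ k * x i⌉ ≤ 2 ^ k :=
    Int.ceil_le.2 <| by
      push_cast
      exact mul_le_of_le_one_right (by positivity) (hx_mem i).2
  refine ⟨_, ⟨k, fun i => (⌈2 ^ k * x i⌉ - 1).toNat, fun i => ?_, rfl⟩, ?_⟩
  · zify
    grind
  · have cast_toNat (i : Fin n) : ((⌈2 ^ k * x i⌉ - 1).toNat : ℝ) = ⌈2 ^ k * x i⌉ - 1 := by
      exact_mod_cast Int.toNat_of_nonneg (Int.sub_nonneg_of_le (ceil_pos i))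
    simpa only [cast_toNat, sub_add_cancel] using dyadicCell_ae_eq_Icc k x

lemma isRearrangement_abs_iff (hf : ∀ x ∈ Q0 n, 0 ≤ f x) :
    IsRearrangement (fun x => |f x|) g ↔ IsRearrangement f g := by
  have superlevel_eq (c : ℝ) : {x ∈ Q0 n | c < |f x|} = {x ∈ Q0 n | c < f x} :=
    sep_ext_iff.2 fun x hx => by rw [abs_of_nonneg (hf x hx)]
  simp only [IsRearrangement, superlevel_eq]

lemma IsRearrangement.isDecreasingRearrangement (hf : AEMeasurable f (volume.restrict (Q0 n)))
    (hg : IsRearrangement f g) : IsDecreasingRearrangement f g (volume.restrict (Q0 n)) := by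
  obtain ⟨hg_anti, -, hg_dist⟩ := hg
  have : IsProbabilityMeasure (volume.restrict (Q0 n)) :=
    isProbabilityMeasure_iff_real.2 (volume_real_restrict_Q0 n)
  have : IsProbabilityMeasure (volume.restrict (Ioc (0 : ℝ) 1)) := ⟨by simp⟩
  have hgm : AEMeasurable g (volume.restrict (Ioc 0 1)) :=
    aemeasurable_restrict_of_antitoneOn measurableSet_Ioc hg_anti
  have map_Ioi (c : ℝ) : Measure.map f (volume.restrict (Q0 n)) (Ioi c) =
      Measure.map g (volume.restrict (Ioc 0 1)) (Ioi c) := by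
    rw [Measure.map_apply_of_aemeasurable hf measurableSet_Ioi,
      Measure.map_apply_of_aemeasurable hgm measurableSet_Ioi,
      Measure.restrict_apply' (measurableSet_Q0 n), Measure.restrict_apply' measurableSet_Ioc,
      inter_comm, inter_comm _ (Ioc _ _)]
    exact (hg_dist c).symm
  have := Measure.isProbabilityMeasure_map hf
  have := Measure.isProbabilityMeasure_map hgm
  constructor <;> rw [volume_real_restrict_Q0]
  · exact hg_anti.mono Ioo_subset_Ioc_self
  · rw [restrict_Ioo_eq_restrict_Ioc]
    refine ⟨hf, hgm, Measure.ext_of_Iic _ _ fun c => ?_⟩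
    rw [← compl_Ioi, prob_compl_eq_one_sub measurableSet_Ioi,
      prob_compl_eq_one_sub measurableSet_Ioi, map_Ioi]

theorem dyadic_bmo_rearrangement_star_general (hf : IntegrableOn f (Q0 n))
    (hM : ∀ Q, IsDyadic n Q → oscOn f Q ≤ M)
    (hg : IsDecreasingRearrangement f g (volume.restrict (Q0 n)))
    (ha : 0 ≤ a) (hab : a < b) (hb : b ≤ 1) : oscI g (Ioc a b) ≤ 2 ^ n * M := by
  rw [IntegrableOn, restrict_Q0_eq_restrict_dyadicCell] at hf
  rw [restrict_Q0_eq_restrict_dyadicCell] at hg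
  have hM_cell (k : ℕ) (x : Fin n → ℝ) (hx : x ∈ dyadicCell 0 1) :
      meanOsc f (volume.restrict (dyadicCell k x)) ≤ M := by
    obtain ⟨Q, hQ, hQ_eq⟩ := exists_isDyadic_ae_eq_dyadicCell k hx
    rw [Measure.restrict_congr_set hQ_eq, ← oscOn_eq_meanOsc]
    exact hM Q hQ
  rw [oscI_eq_meanOsc]
  simpa only [Fintype.card_fin] using meanOsc_rearrangement_le hf hM_cell hg ha hab hb

end UnitCube

/-- **Remark 3.1.** If `f : [0,1]ⁿ → [0,∞)` is integrable with `Ω(f,Q) ≤ M` for all dyadic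
`Q`, then the nonincreasing rearrangement `f*` satisfies `‖f*‖_* ≤ 2ⁿ M`: for every
subinterval `J = (a,b] ⊆ (0,1]` of positive length, `(1/|J|) ∫_J |f* − (f*)_J| ≤ 2ⁿ M`. -/
theorem dyadic_bmo_rearrangement_star (n : ℕ) (hn : 1 ≤ n)
    (f : (Fin n → ℝ) → ℝ) (hf : IntegrableOn f (Q0 n)) (hpos : ∀ x ∈ Q0 n, 0 ≤ f x)
    (M : ℝ) (hM : ∀ Q, IsDyadic n Q → oscOn f Q ≤ M)
    (fstar : ℝ → ℝ) (hfs : IsRearrangement (fun x => |f x|) fstar)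
    (a b : ℝ) (ha : 0 ≤ a) (hab : a < b) (hb : b ≤ 1) :
    oscI fstar (Set.Ioc a b) ≤ 2 ^ n * M := by
  exact dyadic_bmo_rearrangement_star_general hf hM
    (((isRearrangement_abs_iff hpos).1 hfs).isDecreasingRearrangement hf.aemeasurable) ha hab hb
end
end
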